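/- arXiv:1810.02846 — 2 statements merged into one kernel-verified Lean document; each statement's English description precedes it below -/
import Mathlib

section
/- Let d = d_1 + ⋯ + d_q with d_m ≥ 0, let (𝐚^{(m)},𝐫^{(m)},𝐬^{(m)}) ∈ Tri^H(n,d_m) for each m, and let (𝐚,𝐫,𝐬) be the concatenation. Suppose (𝐚,𝐫,𝐬) is δ-separated, i.e. whenever m ≠ l, no entry triple (a^{(m)}_t, r^{(m)}_t, s^{(m)}_t) equals an entry triple (a^{(l)}_u, r^{(l)}_u, s^{(l)}_u) (in which case automatically (𝐚,𝐫,𝐬) ∈ Tri^H(n,d)). Then ξ^𝐚_{𝐫,𝐬} = ξ^{𝐚^{(1)}}_{𝐫^{(1)},𝐬^{(1)}} * ⋯ * ξ^{𝐚^{(q)}}_{𝐫^{(q)},𝐬^{(q)}}, and if moreover all entries of all 𝐚^{(m)} lie in B, then η^𝐚_{𝐫,𝐬} = η^{𝐚^{(1)}}_{𝐫^{(1)},𝐬^{(1)}} * ⋯ * η^{𝐚^{(q)}}_{𝐫^{(q)},𝐬^{(q)}}. -/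
open Finset

open scoped Classical TensorProduct

noncomputable section

namespace GS

/-- A *good pair* `(A, 𝔞)`: a `𝕜`-superalgebra `A = ev ⊕ od` which is free as a
`𝕜`-supermodule, together with a subalgebra `𝔞 = aa ⊆ A₀` such that `𝔞` and `A/𝔞` are free,
a complement `𝔠 = cc` of `𝔞` in `A₀`, and an `(A,𝔞)`-basis `B = B_𝔞 ⊔ B_𝔠 ⊔ B_1`
(encoded by `bas : Basis β 𝕜 A` with the partition `part : β → Fin 3`,
where `0` = `B_𝔞`, `1` = `B_𝔠`, `2` = `B_1`). -/
structure GoodPair (𝕜 A β : Type) [CommRing 𝕜] [NonUnitalRing A] [Module 𝕜 A] : Type where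
  ev : Submodule 𝕜 A
  od : Submodule 𝕜 A
  compl : IsCompl ev od
  mul_ee : ∀ a ∈ ev, ∀ b ∈ ev, a * b ∈ ev
  mul_eo : ∀ a ∈ ev, ∀ b ∈ od, a * b ∈ od
  mul_oe : ∀ a ∈ od, ∀ b ∈ ev, a * b ∈ od
  mul_oo : ∀ a ∈ od, ∀ b ∈ od, a * b ∈ ev
  free_ev : Module.Free 𝕜 ev
  free_od : Module.Free 𝕜 od
  aa : Submodule 𝕜 A
  aa_le_ev : aa ≤ ev
  aa_mul : ∀ a ∈ aa, ∀ b ∈ aa, a * b ∈ aa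
  free_aa : Module.Free 𝕜 aa
  free_quot : Module.Free 𝕜 (A ⧸ aa)
  cc : Submodule 𝕜 A
  aa_inf_cc : aa ⊓ cc = ⊥
  aa_sup_cc : aa ⊔ cc = ev
  bas : Module.Basis β 𝕜 A
  part : β → Fin 3
  bas_mem_aa : ∀ i, part i = 0 → bas i ∈ aa
  bas_mem_cc : ∀ i, part i = 1 → bas i ∈ cc
  bas_mem_od : ∀ i, part i = 2 → bas i ∈ od

variable {𝕜 A β : Type} [CommRing 𝕜] [NonUnitalRing A] [Module 𝕜 A]

/-- An element is homogeneous if it lies in the even or the odd part. -/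
def Homog (P : GoodPair 𝕜 A β) (a : A) : Prop := a ∈ P.ev ∨ a ∈ P.od

/-- `H`, the set of nonzero homogeneous elements of `A`. -/
def Hset (P : GoodPair 𝕜 A β) : Set A := {a | Homog P a ∧ a ≠ 0}

/-- `⟨𝐚,𝐜⟩ = #{(k,l) : k > l, a_k odd, c_l odd}` (the Koszul sign count). -/
def koz (od : Submodule 𝕜 A) {d : ℕ} (a c : Fin d → A) : ℕ :=
  (univ.filter fun kl : Fin d × Fin d => kl.2 < kl.1 ∧ a kl.1 ∈ od ∧ c kl.2 ∈ od).card

/-- `⟨σ;𝐚⟩ = #{(k,l) : k < l, σ⁻¹k > σ⁻¹l, a_k and a_l odd}`. -/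
def sgnc (od : Submodule 𝕜 A) {d : ℕ} (σ : Equiv.Perm (Fin d)) (a : Fin d → A) : ℕ :=
  (univ.filter fun kl : Fin d × Fin d =>
    kl.1 < kl.2 ∧ σ⁻¹ kl.2 < σ⁻¹ kl.1 ∧ a kl.1 ∈ od ∧ a kl.2 ∈ od).card

/-- `⟨𝐚,𝐫,𝐬⟩ = #{(k,l) : k < l, a_k, a_l odd, (a_k,r_k,s_k) > (a_l,r_l,s_l)}` with respect to
the fixed total order `ord` on `A × [1,n] × [1,n]`. -/
def ang {n : ℕ} (od : Submodule 𝕜 A) (ord : LinearOrder (A × Fin n × Fin n))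
    {d : ℕ} (a : Fin d → A) (r s : Fin d → Fin n) : ℕ :=
  (univ.filter fun kl : Fin d × Fin d =>
    kl.1 < kl.2 ∧ a kl.1 ∈ od ∧ a kl.2 ∈ od ∧
      ord.lt (a kl.2, r kl.2, s kl.2) (a kl.1, r kl.1, s kl.1)).card

/-- `(𝐚,𝐫,𝐬) ∈ Tri^H(n,d)`: all entries are nonzero homogeneous, and a repeated entry
triple forces evenness. -/
def IsTriH (P : GoodPair 𝕜 A β) {n d : ℕ} (a : Fin d → A) (r s : Fin d → Fin n) : Prop :=
  (∀ k, a k ∈ Hset P) ∧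
    ∀ k l : Fin d, k ≠ l → (a k, r k, s k) = (a l, r l, s l) → a k ∈ P.ev

/-- `(𝐛,𝐫,𝐬) ∈ Tri^B(n,d)` for words of basis elements. -/
def IsTriB (P : GoodPair 𝕜 A β) {n d : ℕ} (b : Fin d → β) (r s : Fin d → Fin n) : Prop :=
  ∀ k l : Fin d, k ≠ l → ((b k, r k, s k) : β × Fin n × Fin n) = (b l, r l, s l) →
    P.part (b k) ≠ 2

/-- Minimal length representatives of the cosets `(S_e × S_f)\S_{e+f}`. -/
def IsShuffle (e f : ℕ) (σ : Equiv.Perm (Fin (e + f))) : Prop :=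
  (∀ k l : Fin (e + f), k < l → (l : ℕ) < e → σ⁻¹ k < σ⁻¹ l) ∧
  (∀ k l : Fin (e + f), k < l → e ≤ (k : ℕ) → σ⁻¹ k < σ⁻¹ l)

/-- The tower of superalgebras `M_n(A)^{⊗d}`, `d ≥ 0`, axiomatised.  `X a r s` is the pure
tensor `ξ^{a_1}_{r_1,s_1} ⊗ ⋯ ⊗ ξ^{a_d}_{r_d,s_d}` of matrix units; it is multilinear in the
`A`-entries, the pure tensors of basis elements form a basis, multiplication is the sign-twisted
(Koszul) componentwise one, `act` is the right action of the symmetric groups by superalgebra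
automorphisms, `evT/odT` is the induced supermodule structure, `star` is the `*`-(shuffle)
product and `nab` gives the components of the deconcatenation coproduct `∇`. -/
structure Tower (𝕜 A β : Type) [CommRing 𝕜] [NonUnitalRing A] [Module 𝕜 A]
    (n : ℕ) (T : ℕ → Type) [∀ e, NonUnitalRing (T e)] [∀ e, Module 𝕜 (T e)]
    (P : GoodPair 𝕜 A β) : Type where
  X : ∀ {e : ℕ}, (Fin e → A) → (Fin e → Fin n) → (Fin e → Fin n) → T e
  X_update_add : ∀ {e : ℕ} (a : Fin e → A) (r s : Fin e → Fin n) (k : Fin e) (x y : A),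
    X (Function.update a k (x + y)) r s
      = X (Function.update a k x) r s + X (Function.update a k y) r s
  X_update_smul : ∀ {e : ℕ} (a : Fin e → A) (r s : Fin e → Fin n) (k : Fin e) (c : 𝕜) (x : A),
    X (Function.update a k (c • x)) r s = c • X (Function.update a k x) r s
  bas : ∀ e : ℕ, Module.Basis ((Fin e → β) × (Fin e → Fin n) × (Fin e → Fin n)) 𝕜 (T e)
  bas_eq : ∀ (e : ℕ) (b : Fin e → β) (r s : Fin e → Fin n),
    bas e (b, r, s) = X (fun k => P.bas (b k)) r s
  X_mul : ∀ {e : ℕ} (a c : Fin e → A) (r s t u : Fin e → Fin n),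
    (∀ k, Homog P (a k)) → (∀ k, Homog P (c k)) →
    X a r s * X c t u
      = if s = t then ((-1 : ℤ) ^ koz P.od a c) • X (fun k => a k * c k) r u else 0
  act : ∀ {e : ℕ}, Equiv.Perm (Fin e) → T e →ₗ[𝕜] T e
  act_act : ∀ {e : ℕ} (σ τ : Equiv.Perm (Fin e)) (x : T e), act τ (act σ x) = act (σ * τ) x
  act_mul : ∀ {e : ℕ} (σ : Equiv.Perm (Fin e)) (x y : T e), act σ (x * y) = act σ x * act σ y
  act_X : ∀ {e : ℕ} (σ : Equiv.Perm (Fin e)) (a : Fin e → A) (r s : Fin e → Fin n),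
    (∀ k, Homog P (a k)) →
    act σ (X a r s) = ((-1 : ℤ) ^ sgnc P.od σ a) • X (a ∘ σ) (r ∘ σ) (s ∘ σ)
  evT : ∀ e : ℕ, Submodule 𝕜 (T e)
  odT : ∀ e : ℕ, Submodule 𝕜 (T e)
  complT : ∀ e : ℕ, IsCompl (evT e) (odT e)
  X_mem_evT : ∀ {e : ℕ} (a : Fin e → A) (r s : Fin e → Fin n), (∀ k, Homog P (a k)) →
    Even (univ.filter fun k => a k ∈ P.od).card → X a r s ∈ evT e
  X_mem_odT : ∀ {e : ℕ} (a : Fin e → A) (r s : Fin e → Fin n), (∀ k, Homog P (a k)) →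
    ¬ Even (univ.filter fun k => a k ∈ P.od).card → X a r s ∈ odT e
  star : ∀ {e f : ℕ}, T e →ₗ[𝕜] T f →ₗ[𝕜] T (e + f)
  star_X : ∀ {e f : ℕ} (a : Fin e → A) (r s : Fin e → Fin n)
      (c : Fin f → A) (t u : Fin f → Fin n),
    star (X a r s) (X c t u)
      = ∑ σ ∈ univ.filter (IsShuffle e f),
          act σ (X (Fin.append a c) (Fin.append r t) (Fin.append s u))
  nab : ∀ e f : ℕ, T (e + f) →ₗ[𝕜] TensorProduct 𝕜 (T e) (T f)
  nab_X : ∀ (e f : ℕ) (a : Fin (e + f) → A) (r s : Fin (e + f) → Fin n),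
    nab e f (X a r s)
      = (X (a ∘ Fin.castAdd f) (r ∘ Fin.castAdd f) (s ∘ Fin.castAdd f))
          ⊗ₜ[𝕜] (X (a ∘ Fin.natAdd e) (r ∘ Fin.natAdd e) (s ∘ Fin.natAdd e))

variable {n : ℕ} {T : ℕ → Type} [∀ e, NonUnitalRing (T e)] [∀ e, Module 𝕜 (T e)]

/-- `ξ^𝐚_{𝐫,𝐬}`, the signed sum of the pure tensors over the `S_d`-orbit of `(𝐚,𝐫,𝐬)`. -/
def xiH {P : GoodPair 𝕜 A β} (D : Tower 𝕜 A β n T P) (ord : LinearOrder (A × Fin n × Fin n))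
    {d : ℕ} (a : Fin d → A) (r s : Fin d → Fin n) : T d :=
  ∑ w ∈ (univ.image fun σ : Equiv.Perm (Fin d) => (a ∘ σ, r ∘ σ, s ∘ σ)),
    ((-1 : ℤ) ^ (ang P.od ord a r s + ang P.od ord w.1 w.2.1 w.2.2)) • D.X w.1 w.2.1 w.2.2

/-- `ξ^𝐛_{𝐫,𝐬}` for a word `𝐛` of basis elements. -/
def xiB {P : GoodPair 𝕜 A β} (D : Tower 𝕜 A β n T P) (ord : LinearOrder (A × Fin n × Fin n))
    {d : ℕ} (b : Fin d → β) (r s : Fin d → Fin n) : T d :=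
  xiH D ord (fun k => P.bas (b k)) r s

/-- `[𝐛,𝐫,𝐬]^b_{r,s}`, the multiplicity of an entry triple in a word triple. -/
def mco {n d : ℕ} (b : Fin d → β) (r s : Fin d → Fin n) (w : β × Fin n × Fin n) : ℕ :=
  (univ.filter fun k => ((b k, r k, s k) : β × Fin n × Fin n) = w).card

/-- `∏ ([𝐛,𝐫,𝐬]^b_{r,s})!` over the entry triples whose basis element satisfies `sel`
(e.g. `sel i = (part i = 1)` gives `[𝐛,𝐫,𝐬]^!_𝔠`). -/
def facSel (sel : β → Prop) {n d : ℕ} (b : Fin d → β) (r s : Fin d → Fin n) : ℕ :=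
  ∏ w ∈ ((univ.image fun k => ((b k, r k, s k) : β × Fin n × Fin n)).filter fun w => sel w.1),
    Nat.factorial (mco b r s w)

/-- `η^𝐛_{𝐫,𝐬} := [𝐛,𝐫,𝐬]^!_𝔠 • ξ^𝐛_{𝐫,𝐬}`. -/
def eta {P : GoodPair 𝕜 A β} (D : Tower 𝕜 A β n T P) (ord : LinearOrder (A × Fin n × Fin n))
    {d : ℕ} (b : Fin d → β) (r s : Fin d → Fin n) : T d :=
  facSel (fun i => P.part i = 1) b r s • xiB D ord b r s

/-- `S^A(n,d) = (M_n(A)^{⊗d})^{S_d}`, the invariants. -/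
def SchurS {P : GoodPair 𝕜 A β} (D : Tower 𝕜 A β n T P) (d : ℕ) : Submodule 𝕜 (T d) where
  carrier := {x | ∀ σ : Equiv.Perm (Fin d), D.act σ x = x}
  add_mem' := by
    intro x y hx hy σ
    rw [map_add, hx σ, hy σ]
  zero_mem' := by
    intro σ; exact map_zero _
  smul_mem' := by
    intro c x hx σ
    rw [map_smul, hx σ]

/-- The generalized Schur algebra `T^A_𝔞(n,d)`, the `𝕜`-span of the `η^𝐛_{𝐫,𝐬}`,
`(𝐛,𝐫,𝐬) ∈ Tri^B(n,d)`. -/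
def SchurT {P : GoodPair 𝕜 A β} (D : Tower 𝕜 A β n T P) (ord : LinearOrder (A × Fin n × Fin n))
    (d : ℕ) : Submodule 𝕜 (T d) :=
  Submodule.span 𝕜 {x | ∃ b r s, IsTriB P b r s ∧ x = eta D ord b r s}

/-- `S^𝔞(n,d) = (M_n(𝔞)^{⊗d})^{S_d} ⊆ S^A(n,d)`. -/
def SchurA {P : GoodPair 𝕜 A β} (D : Tower 𝕜 A β n T P) (d : ℕ) : Submodule 𝕜 (T d) :=
  Submodule.span 𝕜 {x | ∃ a r s, (∀ k, a k ∈ P.aa) ∧ x = D.X a r s} ⊓ SchurS D d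

/-- `ξ^f = E^f ⊗ ⋯ ⊗ E^f` for `f ∈ A`. -/
def xiIdem {P : GoodPair 𝕜 A β} (D : Tower 𝕜 A β n T P) (f : A) (d : ℕ) : T d :=
  ∑ r : Fin d → Fin n, D.X (fun _ => f) r r

/-- Transport along an equality of degrees. -/
def tcast {e f : ℕ} (h : e = f) : T e ≃ₗ[𝕜] T f := by
  subst h; exact LinearEquiv.refl 𝕜 (T e)

/-- Iterated `*`-product `x_1 * x_2 * ⋯ * x_d` of degree-one pure tensors read off from a
word (associated to the left). -/
def starIter {P : GoodPair 𝕜 A β} (D : Tower 𝕜 A β n T P) :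
    ∀ (e : ℕ), (Fin e → A) → (Fin e → Fin n) → (Fin e → Fin n) → T e
  | 0, _, _, _ => D.X Fin.elim0 Fin.elim0 Fin.elim0
  | (e + 1), a, r, s =>
      D.star (starIter D e (a ∘ Fin.castSucc) (r ∘ Fin.castSucc) (s ∘ Fin.castSucc))
        (D.X (fun _ : Fin 1 => a (Fin.last e)) (fun _ => r (Fin.last e)) (fun _ => s (Fin.last e)))

/-- Iterated `*`-product of blockwise given elements. -/
def starBlocks {P : GoodPair 𝕜 A β} (D : Tower 𝕜 A β n T P) :
    ∀ (q : ℕ) (sz : Fin q → ℕ), (∀ m, T (sz m)) → T (∑ m, sz m)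
  | 0, sz, _ => cast (congrArg T (Fin.sum_univ_zero sz).symm) (D.X Fin.elim0 Fin.elim0 Fin.elim0)
  | (q + 1), sz, x =>
      cast (congrArg T (Fin.sum_univ_castSucc sz).symm)
        (D.star (starBlocks D q (fun m => sz m.castSucc) (fun m => x m.castSucc))
          (x (Fin.last q)))

/-- Concatenation of a tuple of words of lengths `sz 0, …, sz (q-1)`. -/
def concatB {α : Type} : ∀ {q : ℕ} (sz : Fin q → ℕ), (∀ m, Fin (sz m) → α) → Fin (∑ m, sz m) → α
  | 0, sz, _ => fun k => Fin.elim0 (cast (congrArg Fin (Fin.sum_univ_zero sz)) k)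
  | (q + 1), sz, f => fun k =>
      Fin.append (concatB (fun m => sz m.castSucc) (fun m => f m.castSucc)) (f (Fin.last q))
        (cast (congrArg Fin (Fin.sum_univ_castSucc sz)) k)

/-- A triple of words `(𝐛,𝐫,𝐬)`. -/
abbrev WordTriple (β : Type) (n d : ℕ) : Type :=
  (Fin d → β) × (Fin d → Fin n) × (Fin d → Fin n)

/-- The diagonal right place-permutation action on triples of words. -/
def wAct {d : ℕ} (w : WordTriple β n d) (σ : Equiv.Perm (Fin d)) : WordTriple β n d :=
  (w.1 ∘ σ, w.2.1 ∘ σ, w.2.2 ∘ σ)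

/-- The `k`-th entry triple `(b_k, r_k, s_k)` (with `b_k` realized in `A`). -/
def entryAt (P : GoodPair 𝕜 A β) {n d : ℕ} (w : WordTriple β n d) (k : Fin d) :
    A × Fin n × Fin n :=
  (P.bas (w.1 k), w.2.1 k, w.2.2 k)

/-- The lexicographic order on triples of words induced by the total order `ord`. -/
def wordLE (P : GoodPair 𝕜 A β) {n : ℕ} (ord : LinearOrder (A × Fin n × Fin n)) {d : ℕ}
    (w w' : WordTriple β n d) : Prop :=
  (∀ k, entryAt P w k = entryAt P w' k) ∨
    ∃ l : Fin d, (∀ k, k < l → entryAt P w k = entryAt P w' k) ∧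
      ord.lt (entryAt P w l) (entryAt P w' l)

/-- `Tri^B_0(n,d)`: the lexicographically minimal representatives of the `S_d`-orbits on
`Tri^B(n,d)`. -/
def IsTri0 (P : GoodPair 𝕜 A β) {n : ℕ} (ord : LinearOrder (A × Fin n × Fin n)) {d : ℕ}
    (w : WordTriple β n d) : Prop :=
  IsTriB P w.1 w.2.1 w.2.2 ∧ ∀ σ : Equiv.Perm (Fin d), wordLE P ord w (wAct w σ)

/-- The first `l` letters of each word. -/
def firstW {d : ℕ} (l : ℕ) (hl : l ≤ d) (w : WordTriple β n d) : WordTriple β n l :=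
  (fun k => w.1 ⟨k, lt_of_lt_of_le k.isLt hl⟩,
   fun k => w.2.1 ⟨k, lt_of_lt_of_le k.isLt hl⟩,
   fun k => w.2.2 ⟨k, lt_of_lt_of_le k.isLt hl⟩)

/-- The last `d - l` letters of each word. -/
def lastW {d : ℕ} (l : ℕ) (hl : l ≤ d) (w : WordTriple β n d) : WordTriple β n (d - l) :=
  (fun k => w.1 ⟨l + (k : ℕ), by have := k.isLt; omega⟩,
   fun k => w.2.1 ⟨l + (k : ℕ), by have := k.isLt; omega⟩,
   fun k => w.2.2 ⟨l + (k : ℕ), by have := k.isLt; omega⟩)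

/-- Concatenation of words. -/
def appF {α : Type} {d : ℕ} (l : ℕ) (hl : l ≤ d) (f : Fin l → α) (g : Fin (d - l) → α) :
    Fin d → α :=
  fun k => if hk : (k : ℕ) < l then f ⟨k, hk⟩ else g ⟨(k : ℕ) - l, by have := k.isLt; omega⟩

/-- Concatenation `T¹T²` of two triples of words. -/
def concatW {d : ℕ} (l : ℕ) (hl : l ≤ d) (p : WordTriple β n l × WordTriple β n (d - l)) :
    WordTriple β n d :=
  (appF l hl p.1.1 p.2.1, appF l hl p.1.2.1 p.2.2.1, appF l hl p.1.2.2 p.2.2.2)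

/-- `Spl_l(T)`, the set of `l`-splits of `T ∈ Tri^B_0(n,d)`. -/
def splitsF (P : GoodPair 𝕜 A β) {n : ℕ} (ord : LinearOrder (A × Fin n × Fin n)) {d : ℕ}
    (l : ℕ) (hl : l ≤ d) (w : WordTriple β n d) :
    Finset (WordTriple β n l × WordTriple β n (d - l)) :=
  (univ.image fun σ : Equiv.Perm (Fin d) =>
      (firstW l hl (wAct w σ), lastW l hl (wAct w σ))).filter
    fun p => IsTri0 P ord p.1 ∧ IsTri0 P ord p.2

/-- The number of inversions (= Coxeter length) of a permutation. -/
def invCount {d : ℕ} (σ : Equiv.Perm (Fin d)) : ℕ :=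
  (univ.filter fun kl : Fin d × Fin d => kl.1 < kl.2 ∧ σ kl.2 < σ kl.1).card

/-- The submodule `{x | x·ε = x}` (for an idempotent `ε` this is `R·ε`). -/
def rfix (𝕜 : Type) {R : Type} [CommRing 𝕜] [NonUnitalRing R] [Module 𝕜 R]
    [IsScalarTower 𝕜 R R] (ε : R) : Submodule 𝕜 R where
  carrier := {x | x * ε = x}
  add_mem' := by
    intro x y hx hy
    simp only [Set.mem_setOf_eq] at *
    rw [add_mul, hx, hy]
  zero_mem' := by simp
  smul_mem' := by
    intro c x hx
    simp only [Set.mem_setOf_eq] at *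
    rw [smul_mul_assoc, hx]

/-- Right `εSε`-module endomorphism property for a map of `S·ε = M ⊓ rfix ε`,
where `S` is the (possibly non-unital) algebra realized as the submodule `M` of `R`. -/
def IsEquivar (𝕜 : Type) {R : Type} [CommRing 𝕜] [NonUnitalRing R] [Module 𝕜 R]
    [IsScalarTower 𝕜 R R] (M : Submodule 𝕜 R) (ε : R)
    (f : ↥(M ⊓ rfix 𝕜 ε) →ₗ[𝕜] ↥(M ⊓ rfix 𝕜 ε)) : Prop :=
  ∀ (x : ↥(M ⊓ rfix 𝕜 ε)) (c : R), c ∈ M → ε * c * ε = c →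
    ∀ h : (x : R) * c ∈ M ⊓ rfix 𝕜 ε,
      ((f ⟨(x : R) * c, h⟩ : ↥(M ⊓ rfix 𝕜 ε)) : R) = (f x : R) * c

/-- `ε` is a *double centralizer idempotent* for the algebra `M ⊆ R`: the left
multiplication map `λ : M → End_{εMε}(Mε)` is bijective. -/
def IsDCI (𝕜 : Type) {R : Type} [CommRing 𝕜] [NonUnitalRing R] [Module 𝕜 R]
    [IsScalarTower 𝕜 R R] (M : Submodule 𝕜 R) (ε : R) : Prop :=
  (∀ s ∈ M, ∀ s' ∈ M, (∀ x ∈ M ⊓ rfix 𝕜 ε, s * x = s' * x) → s = s') ∧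
  (∀ f : ↥(M ⊓ rfix 𝕜 ε) →ₗ[𝕜] ↥(M ⊓ rfix 𝕜 ε), IsEquivar 𝕜 M ε f →
    ∃ s ∈ M, ∀ x : ↥(M ⊓ rfix 𝕜 ε), (f x : R) = s * (x : R))

lemma parity_aux {d : ℕ} (σ : Equiv.Perm (Fin d)) (O : Fin d → Prop) (Q : Fin d → Fin d → Prop)
    (hQ : ∀ k l, O k → O l → k ≠ l → (Q k l ↔ ¬ Q l k)) :
    Even ((univ.filter fun kl : Fin d × Fin d =>
        kl.1 < kl.2 ∧ O (σ kl.1) ∧ O (σ kl.2) ∧ Q (σ kl.1) (σ kl.2)).card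
      + (univ.filter fun kl : Fin d × Fin d => kl.1 < kl.2 ∧ O kl.1 ∧ O kl.2 ∧ Q kl.1 kl.2).card
      + (univ.filter fun kl : Fin d × Fin d =>
        kl.1 < kl.2 ∧ σ⁻¹ kl.2 < σ⁻¹ kl.1 ∧ O kl.1 ∧ O kl.2).card) := by
  have h1 : (univ.filter fun kl : Fin d × Fin d =>
        kl.1 < kl.2 ∧ O (σ kl.1) ∧ O (σ kl.2) ∧ Q (σ kl.1) (σ kl.2)).card
      = (univ.filter fun kl : Fin d × Fin d =>
        σ⁻¹ kl.1 < σ⁻¹ kl.2 ∧ O kl.1 ∧ O kl.2 ∧ Q kl.1 kl.2).card := by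
    refine Finset.card_bij' (fun x _ => (σ x.1, σ x.2)) (fun x _ => (σ⁻¹ x.1, σ⁻¹ x.2)) ?_ ?_ ?_ ?_
    · intro x hx; simpa using hx
    · intro x hx; simpa using hx
    · intro x hx; simp
    · intro x hx; simp
  have h1' : (univ.filter fun kl : Fin d × Fin d =>
        σ⁻¹ kl.1 < σ⁻¹ kl.2 ∧ O kl.1 ∧ O kl.2 ∧ Q kl.1 kl.2).card
      = (univ.filter fun kl : Fin d × Fin d =>
        kl.1 < kl.2 ∧ σ⁻¹ kl.1 < σ⁻¹ kl.2 ∧ O kl.1 ∧ O kl.2 ∧ Q kl.1 kl.2).card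
       + (univ.filter fun kl : Fin d × Fin d =>
        kl.2 < kl.1 ∧ σ⁻¹ kl.1 < σ⁻¹ kl.2 ∧ O kl.1 ∧ O kl.2 ∧ Q kl.1 kl.2).card := by
    rw [← Finset.card_union_of_disjoint]
    · congr 1; ext ⟨k, l⟩
      simp only [mem_filter, mem_univ, true_and, mem_union]
      constructor
      · intro h
        rcases lt_trichotomy k l with h' | h' | h'
        · exact Or.inl ⟨h', h⟩
        · subst h'; exact absurd h.1 (lt_irrefl _)
        · exact Or.inr ⟨h', h⟩
      · rintro (h | h) <;> exact h.2
    · rw [Finset.disjoint_filter]; rintro ⟨k, l⟩ - h h'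
      exact lt_asymm h.1 h'.1
  have h2 : (univ.filter fun kl : Fin d × Fin d =>
        kl.1 < kl.2 ∧ O kl.1 ∧ O kl.2 ∧ Q kl.1 kl.2).card
      = (univ.filter fun kl : Fin d × Fin d =>
        kl.1 < kl.2 ∧ σ⁻¹ kl.1 < σ⁻¹ kl.2 ∧ O kl.1 ∧ O kl.2 ∧ Q kl.1 kl.2).card
       + (univ.filter fun kl : Fin d × Fin d =>
        kl.1 < kl.2 ∧ σ⁻¹ kl.2 < σ⁻¹ kl.1 ∧ O kl.1 ∧ O kl.2 ∧ Q kl.1 kl.2).card := by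
    rw [← Finset.card_union_of_disjoint]
    · congr 1; ext ⟨k, l⟩
      simp only [mem_filter, mem_univ, true_and, mem_union]
      constructor
      · intro h
        rcases lt_trichotomy (σ⁻¹ k) (σ⁻¹ l) with h' | h' | h'
        · exact Or.inl ⟨h.1, h', h.2⟩
        · have := σ⁻¹.injective h'
          subst this; exact absurd h.1 (lt_irrefl _)
        · exact Or.inr ⟨h.1, h', h.2⟩
      · rintro (h | h) <;> exact ⟨h.1, h.2.2⟩
    · rw [Finset.disjoint_filter]; rintro ⟨k, l⟩ - h h'
      exact lt_asymm h.2.1 h'.2.1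
  have h3 : (univ.filter fun kl : Fin d × Fin d =>
        kl.1 < kl.2 ∧ σ⁻¹ kl.2 < σ⁻¹ kl.1 ∧ O kl.1 ∧ O kl.2).card
      = (univ.filter fun kl : Fin d × Fin d =>
        kl.1 < kl.2 ∧ σ⁻¹ kl.2 < σ⁻¹ kl.1 ∧ O kl.1 ∧ O kl.2 ∧ Q kl.1 kl.2).card
       + (univ.filter fun kl : Fin d × Fin d =>
        kl.2 < kl.1 ∧ σ⁻¹ kl.1 < σ⁻¹ kl.2 ∧ O kl.1 ∧ O kl.2 ∧ Q kl.1 kl.2).card := by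
    have h4 : (univ.filter fun kl : Fin d × Fin d =>
        kl.2 < kl.1 ∧ σ⁻¹ kl.1 < σ⁻¹ kl.2 ∧ O kl.1 ∧ O kl.2 ∧ Q kl.1 kl.2).card
        = (univ.filter fun kl : Fin d × Fin d =>
        kl.1 < kl.2 ∧ σ⁻¹ kl.2 < σ⁻¹ kl.1 ∧ O kl.1 ∧ O kl.2 ∧ ¬ Q kl.1 kl.2).card := by
      refine Finset.card_bij' (fun x _ => (x.2, x.1)) (fun x _ => (x.2, x.1)) ?_ ?_ ?_ ?_
      · rintro ⟨k, l⟩ hx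
        simp only [mem_filter, mem_univ, true_and] at hx ⊢
        obtain ⟨a, b, c, e, f⟩ := hx
        exact ⟨a, b, e, c, (hQ k l c e a.ne').1 f⟩
      · rintro ⟨k, l⟩ hx
        simp only [mem_filter, mem_univ, true_and] at hx ⊢
        obtain ⟨a, b, c, e, f⟩ := hx
        exact ⟨a, b, e, c, (hQ l k e c a.ne').2 f⟩
      · intro x hx; simp
      · intro x hx; simp
    rw [h4, ← Finset.card_union_of_disjoint]
    · congr 1; ext ⟨k, l⟩
      simp only [mem_filter, mem_univ, true_and, mem_union]
      tauto
    · rw [Finset.disjoint_filter]; rintro ⟨k, l⟩ - h h'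
      exact h'.2.2.2.2 h.2.2.2.2
  rw [h1, h1', h2, h3, Nat.even_iff]
  omega

lemma IsTriH.homog {P : GoodPair 𝕜 A β} {d : ℕ} {a : Fin d → A} {r s : Fin d → Fin n}
    (h : IsTriH P a r s) (k) : Homog P (a k) := (h.1 k).1

lemma IsTriH.ne {P : GoodPair 𝕜 A β} {d : ℕ} {a : Fin d → A} {r s : Fin d → Fin n}
    (h : IsTriH P a r s) {k l : Fin d} (hkl : k ≠ l) (ho : a k ∈ P.od) :
    (a k, r k, s k) ≠ (a l, r l, s l) := fun he =>
  (h.1 k).2 (Submodule.disjoint_def.1 P.compl.disjoint _ (h.2 k l hkl he) ho)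

lemma IsTriH.comp {P : GoodPair 𝕜 A β} {d : ℕ} {a : Fin d → A} {r s : Fin d → Fin n}
    (h : IsTriH P a r s) (σ : Equiv.Perm (Fin d)) : IsTriH P (a ∘ σ) (r ∘ σ) (s ∘ σ) :=
  ⟨fun k => h.1 _, fun k l hkl he => h.2 (σ k) (σ l) (fun h' => hkl (σ.injective h')) he⟩

lemma ang_comp {P : GoodPair 𝕜 A β} (ord : LinearOrder (A × Fin n × Fin n)) {d : ℕ}
    {a : Fin d → A} {r s : Fin d → Fin n}
    (h : IsTriH P a r s) (σ : Equiv.Perm (Fin d)) :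
    Even (ang P.od ord (a ∘ σ) (r ∘ σ) (s ∘ σ) + ang P.od ord a r s + sgnc P.od σ a) := by
  have key := parity_aux σ (fun k => a k ∈ P.od)
    (fun k l => ord.lt (a l, r l, s l) (a k, r k, s k)) ?_
  · unfold ang sgnc
    convert key using 4
    · ext; simp only [mem_filter, Function.comp]
    · ext; simp only [mem_filter]
  intro k l hk hl hkl
  have hne := h.ne hkl hk
  constructor
  · intro h1 h2; exact @lt_asymm _ ord.toPreorder _ _ h1 h2
  · intro h1
    rcases @lt_trichotomy _ ord (a k, r k, s k) (a l, r l, s l) with hlt | hlt | hlt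
    · exact absurd hlt h1
    · exact absurd hlt hne
    · exact hlt

/-- cross inversions -/
def crossN (od : Submodule 𝕜 A) (ord : LinearOrder (A × Fin n × Fin n)) {e f : ℕ}
    (a : Fin e → A) (r s : Fin e → Fin n) (c : Fin f → A) (t u : Fin f → Fin n) : ℕ :=
  ∑ i, ∑ j, if a i ∈ od ∧ c j ∈ od ∧ ord.lt (c j, t j, u j) (a i, r i, s i) then 1 else 0

lemma crossN_comp (od : Submodule 𝕜 A) (ord : LinearOrder (A × Fin n × Fin n)) {e f : ℕ}
    (a : Fin e → A) (r s : Fin e → Fin n) (c : Fin f → A) (t u : Fin f → Fin n)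
    (ρ : Equiv.Perm (Fin e)) (τ : Equiv.Perm (Fin f)) :
    crossN od ord (a ∘ ρ) (r ∘ ρ) (s ∘ ρ) (c ∘ τ) (t ∘ τ) (u ∘ τ) = crossN od ord a r s c t u := by
  unfold crossN
  refine Fintype.sum_equiv ρ _ _ fun i => ?_
  exact Fintype.sum_equiv τ _ _ fun j => rfl

lemma ang_append (od : Submodule 𝕜 A) (ord : LinearOrder (A × Fin n × Fin n)) {e f : ℕ}
    (a : Fin e → A) (r s : Fin e → Fin n) (c : Fin f → A) (t u : Fin f → Fin n) :
    ang od ord (Fin.append a c) (Fin.append r t) (Fin.append s u)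
      = ang od ord a r s + ang od ord c t u + crossN od ord a r s c t u := by
  unfold ang crossN
  simp only [Finset.card_filter, Fintype.sum_prod_type, Fin.sum_univ_add, Fin.append_left,
    Fin.append_right, Finset.sum_add_distrib]
  have h1 : ∀ (i : Fin e) (j : Fin f), Fin.castAdd f i < Fin.natAdd e j := by
    intro i j; rw [Fin.lt_def]; simp; omega
  have h2 : ∀ (i : Fin e) (j : Fin f), ¬ (Fin.natAdd e j < Fin.castAdd f i) := by
    intro i j; exact (h1 i j).asymm
  have h3 : ∀ (i i' : Fin e), Fin.castAdd f i < Fin.castAdd f i' ↔ i < i' := by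
    intro i j; rfl
  have h4 : ∀ (i i' : Fin f), Fin.natAdd e i < Fin.natAdd e i' ↔ i < i' := by
    intro i j; simp
  simp only [h1, h2, h3, h4, true_and, false_and, if_false, Finset.sum_const_zero]
  ring

lemma IsTriH.append {P : GoodPair 𝕜 A β} {e f : ℕ}
    {a : Fin e → A} {r s : Fin e → Fin n} {c : Fin f → A} {t u : Fin f → Fin n}
    (h1 : IsTriH P a r s) (h2 : IsTriH P c t u)
    (hsep : ∀ i j, (a i, r i, s i) ≠ (c j, t j, u j)) :
    IsTriH P (Fin.append a c) (Fin.append r t) (Fin.append s u) := by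
  constructor
  · intro k
    refine Fin.addCases (fun i => ?_) (fun i => ?_) k
    · simpa using h1.1 i
    · simpa using h2.1 i
  · intro k l
    refine Fin.addCases (fun i => ?_) (fun i => ?_) k <;>
    refine Fin.addCases (fun j => ?_) (fun j => ?_) l
    · simp only [Fin.append_left]
      intro hne; exact h1.2 i j (fun h => hne (by rw [h]))
    · simp only [Fin.append_left, Fin.append_right]
      intro _ he; exact absurd he (hsep _ _)
    · simp only [Fin.append_left, Fin.append_right]
      intro _ he; exact absurd he.symm (hsep _ _)
    · simp only [Fin.append_right]
      intro hne; exact h2.2 i j (fun h => hne (by rw [h]))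

/-- block permutation -/
def blk {e f : ℕ} (ρ : Equiv.Perm (Fin e)) (τ : Equiv.Perm (Fin f)) : Equiv.Perm (Fin (e + f)) :=
  finSumFinEquiv.permCongr (Equiv.Perm.sumCongr ρ τ)

lemma blk_left {e f : ℕ} (ρ : Equiv.Perm (Fin e)) (τ : Equiv.Perm (Fin f)) (i : Fin e) :
    blk ρ τ (Fin.castAdd f i) = Fin.castAdd f (ρ i) := by
  simp [blk, Equiv.permCongr_apply]

lemma blk_right {e f : ℕ} (ρ : Equiv.Perm (Fin e)) (τ : Equiv.Perm (Fin f)) (i : Fin f) :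
    blk ρ τ (Fin.natAdd e i) = Fin.natAdd e (τ i) := by
  simp [blk, Equiv.permCongr_apply]

lemma append_blk {α : Type} {e f : ℕ} (a : Fin e → α) (c : Fin f → α)
    (ρ : Equiv.Perm (Fin e)) (τ : Equiv.Perm (Fin f)) :
    Fin.append a c ∘ blk ρ τ = Fin.append (a ∘ ρ) (c ∘ τ) := by
  funext k
  refine Fin.addCases (fun i => ?_) (fun i => ?_) k
  · simp [blk_left]
  · simp [blk_right]

lemma isShuffle_iff {e f : ℕ} (σ : Equiv.Perm (Fin (e + f))) :
    IsShuffle e f σ ↔ StrictMono (fun i : Fin e => σ⁻¹ (Fin.castAdd f i)) ∧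
      StrictMono (fun i : Fin f => σ⁻¹ (Fin.natAdd e i)) := by
  constructor
  · rintro ⟨h1, h2⟩
    exact ⟨fun i j hij => h1 _ _ hij (by simp), fun i j hij => h2 _ _ (by simpa using hij) (by simp)⟩
  · rintro ⟨h1, h2⟩
    constructor
    · intro k l hkl hl
      exact @h1 ⟨k, lt_trans hkl hl⟩ ⟨l, hl⟩ hkl
    · intro k l
      refine Fin.addCases (fun i => ?_) (fun i => ?_) k
      · intro _ h; simp at h; omega
      · refine Fin.addCases (fun j => ?_) (fun j => ?_) l
        · intro h; rw [Fin.lt_def] at h; simp at h; omega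
        · intro h _; exact h2 (by simpa using h)

lemma exists_shuffle {e f : ℕ} (τ : Equiv.Perm (Fin (e + f))) :
    ∃ (ρ : Equiv.Perm (Fin e)) (π : Equiv.Perm (Fin f)) (σ : Equiv.Perm (Fin (e + f))),
      IsShuffle e f σ ∧ τ = blk ρ π * σ := by
  set f1 : Fin e → Fin (e + f) := fun i => τ⁻¹ (Fin.castAdd f i) with hf1
  set f2 : Fin f → Fin (e + f) := fun i => τ⁻¹ (Fin.natAdd e i) with hf2
  refine ⟨Tuple.sort f1, Tuple.sort f2, (blk (Tuple.sort f1) (Tuple.sort f2))⁻¹ * τ, ?_, by simp⟩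
  rw [isShuffle_iff]
  constructor
  · have : StrictMono (f1 ∘ Tuple.sort f1) := (Tuple.monotone_sort f1).strictMono_of_injective
      ((τ⁻¹.injective.comp (Fin.castAdd_injective e f)).comp (Tuple.sort f1).injective)
    convert this using 2 with i
    simp [blk_left, hf1]
  · have : StrictMono (f2 ∘ Tuple.sort f2) := (Tuple.monotone_sort f2).strictMono_of_injective
      ((τ⁻¹.injective.comp (Fin.natAdd_injective f e)).comp (Tuple.sort f2).injective)
    convert this using 2 with i
    simp [blk_right, hf2]

lemma shuffle_unique {e f : ℕ} {σ τ : Equiv.Perm (Fin (e + f))} (hσ : IsShuffle e f σ)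
    (hτ : IsShuffle e f τ) (h : ∀ k, (σ k : ℕ) < e ↔ (τ k : ℕ) < e) : σ = τ := by
  rw [isShuffle_iff] at hσ hτ
  have r1 : ∀ π : Equiv.Perm (Fin (e + f)), Set.range (fun i : Fin e => π⁻¹ (Fin.castAdd f i))
      = {k | (π k : ℕ) < e} := by
    intro π; ext k; constructor
    · rintro ⟨i, rfl⟩; simp
    · intro hk; exact ⟨⟨π k, hk⟩, by rw [Equiv.Perm.inv_eq_iff_eq]; rfl⟩
  have r2 : ∀ π : Equiv.Perm (Fin (e + f)), Set.range (fun i : Fin f => π⁻¹ (Fin.natAdd e i))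
      = {k | ¬ (π k : ℕ) < e} := by
    intro π; ext k; constructor
    · rintro ⟨i, rfl⟩; simp
    · intro hk
      refine ⟨⟨π k - e, ?_⟩, ?_⟩
      · have := (π k).isLt; simp at hk; omega
      · rw [Equiv.Perm.inv_eq_iff_eq]; ext; simp at hk ⊢; omega
  have e1 := (StrictMono.range_inj hσ.1 hτ.1).1 (by rw [r1, r1]; ext k; exact h k)
  have e2 := (StrictMono.range_inj hσ.2 hτ.2).1 (by rw [r2, r2]; ext k; exact not_congr (h k))
  have : σ⁻¹ = τ⁻¹ := by
    ext1 k
    refine Fin.addCases (fun i => ?_) (fun i => ?_) k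
    · exact congrFun e1 i
    · exact congrFun e2 i
  exact inv_injective this

lemma append_inj {α : Type} {e f : ℕ} {a a' : Fin e → α} {c c' : Fin f → α}
    (h : Fin.append a c = Fin.append a' c') : a = a' ∧ c = c' := by
  constructor
  · funext i; simpa using congrFun h (Fin.castAdd f i)
  · funext i; simpa using congrFun h (Fin.natAdd e i)

lemma side_iff {e f : ℕ}
    {a : Fin e → A} {r s : Fin e → Fin n} {c : Fin f → A} {t u : Fin f → Fin n}
    (hsep : ∀ i j, (a i, r i, s i) ≠ (c j, t j, u j))
    (ρ ρ' : Equiv.Perm (Fin e)) (τ τ' : Equiv.Perm (Fin f)) (k l : Fin (e + f))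
    (ha : Fin.append (a ∘ ρ) (c ∘ τ) k = Fin.append (a ∘ ρ') (c ∘ τ') l)
    (hr : Fin.append (r ∘ ρ) (t ∘ τ) k = Fin.append (r ∘ ρ') (t ∘ τ') l)
    (hs : Fin.append (s ∘ ρ) (u ∘ τ) k = Fin.append (s ∘ ρ') (u ∘ τ') l) :
    (k : ℕ) < e ↔ (l : ℕ) < e := by
  revert ha hr hs
  refine Fin.addCases (fun i => ?_) (fun i => ?_) k <;>
  refine Fin.addCases (fun j => ?_) (fun j => ?_) l <;>
  simp only [Fin.append_left, Fin.append_right, Function.comp] <;> intro ha hr hs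
  · simp
  · exact absurd (by rw [ha, hr, hs]) (hsep (ρ i) (τ' j))
  · exact absurd (by rw [ha, hr, hs]) (hsep (ρ' j) (τ i))
  · simp

lemma xiH_append {P : GoodPair 𝕜 A β} (D : Tower 𝕜 A β n T P)
    (ord : LinearOrder (A × Fin n × Fin n)) {e f : ℕ}
    {a : Fin e → A} {r s : Fin e → Fin n} {c : Fin f → A} {t u : Fin f → Fin n}
    (h1 : IsTriH P a r s) (h2 : IsTriH P c t u)
    (hsep : ∀ i j, (a i, r i, s i) ≠ (c j, t j, u j)) :
    xiH D ord (Fin.append a c) (Fin.append r t) (Fin.append s u)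
      = D.star (xiH D ord a r s) (xiH D ord c t u) := by
  unfold xiH
  simp only [map_sum, LinearMap.sum_apply, map_zsmul, LinearMap.smul_apply, D.star_X,
    Finset.smul_sum]
  rw [← Finset.sum_product', ← Finset.sum_product']
  symm
  refine Finset.sum_bij (fun x _ => (Fin.append x.1.2.1 x.1.1.1 ∘ x.2,
    Fin.append x.1.2.2.1 x.1.1.2.1 ∘ x.2, Fin.append x.1.2.2.2 x.1.1.2.2 ∘ x.2)) ?_ ?_ ?_ ?_
  · rintro ⟨⟨w2, w1⟩, σ⟩ hx
    simp only [mem_product, mem_image, mem_univ, true_and] at hx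
    obtain ⟨⟨⟨τ, rfl⟩, ⟨ρ, rfl⟩⟩, -⟩ := hx
    rw [mem_image]
    refine ⟨blk ρ τ * σ, mem_univ _, ?_⟩
    simp only [← append_blk]
    rfl
  · rintro ⟨⟨w2, w1⟩, σ⟩ hx ⟨⟨w2', w1'⟩, σ'⟩ hx' heq
    simp only [mem_product, mem_image, mem_univ, true_and, mem_filter] at hx hx'
    obtain ⟨⟨⟨τ, rfl⟩, ⟨ρ, rfl⟩⟩, hσ⟩ := hx
    obtain ⟨⟨⟨τ', rfl⟩, ⟨ρ', rfl⟩⟩, hσ'⟩ := hx'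
    simp only [Prod.mk.injEq] at heq
    obtain ⟨ha, hr, hs⟩ := heq
    have hσσ : σ = σ' := shuffle_unique hσ hσ' fun k =>
      side_iff hsep ρ ρ' τ τ' (σ k) (σ' k) (congrFun ha k) (congrFun hr k) (congrFun hs k)
    subst hσσ
    have ha' := append_inj (σ.surjective.injective_comp_right ha)
    have hr' := append_inj (σ.surjective.injective_comp_right hr)
    have hs' := append_inj (σ.surjective.injective_comp_right hs)
    rw [ha'.1, ha'.2, hr'.1, hr'.2, hs'.1, hs'.2]
  · intro w hw
    rw [mem_image] at hw
    obtain ⟨τ, -, rfl⟩ := hw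
    obtain ⟨ρ, π, σ, hσ, rfl⟩ := exists_shuffle τ
    refine ⟨(((c ∘ π, t ∘ π, u ∘ π), (a ∘ ρ, r ∘ ρ, s ∘ ρ)), σ), ?_, ?_⟩
    · simp only [mem_product, mem_image, mem_univ, true_and, mem_filter]
      exact ⟨⟨⟨π, rfl⟩, ⟨ρ, rfl⟩⟩, hσ⟩
    · simp only [← append_blk]
      rfl
  · rintro ⟨⟨w2, w1⟩, σ⟩ hx
    simp only [mem_product, mem_image, mem_univ, true_and] at hx
    obtain ⟨⟨⟨τ, rfl⟩, ⟨ρ, rfl⟩⟩, -⟩ := hx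
    have htri : IsTriH P (Fin.append (a ∘ ρ) (c ∘ τ)) (Fin.append (r ∘ ρ) (t ∘ τ))
        (Fin.append (s ∘ ρ) (u ∘ τ)) :=
      (h1.comp ρ).append (h2.comp τ) (fun i j => hsep _ _)
    have hp := ang_comp ord htri σ
    dsimp only
    rw [D.act_X _ _ _ _ htri.homog, smul_smul, smul_smul, ← pow_add, ← pow_add]
    congr 1
    apply neg_one_pow_congr
    rw [ang_append] at hp ⊢
    rw [crossN_comp] at hp
    simp only [Nat.even_iff] at hp ⊢
    omega

lemma mco_append {e f : ℕ} (b : Fin e → β) (r s : Fin e → Fin n)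
    (c : Fin f → β) (t u : Fin f → Fin n) (w : β × Fin n × Fin n) :
    mco (Fin.append b c) (Fin.append r t) (Fin.append s u) w = mco b r s w + mco c t u w := by
  unfold mco
  simp only [Finset.card_filter, Fin.sum_univ_add, Fin.append_left, Fin.append_right]

lemma facSel_append (sel : β → Prop) {e f : ℕ} (b : Fin e → β) (r s : Fin e → Fin n)
    (c : Fin f → β) (t u : Fin f → Fin n)
    (hsep : ∀ i j, (b i, r i, s i) ≠ (c j, t j, u j)) :
    facSel sel (Fin.append b c) (Fin.append r t) (Fin.append s u)
      = facSel sel b r s * facSel sel c t u := by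
  unfold facSel
  have him : (univ.image fun k => ((Fin.append b c k, Fin.append r t k, Fin.append s u k) :
      β × Fin n × Fin n))
      = (univ.image fun k => (b k, r k, s k)) ∪ (univ.image fun k => (c k, t k, u k)) := by
    ext w
    simp only [mem_image, mem_univ, true_and, mem_union]
    constructor
    · rintro ⟨k, rfl⟩
      refine Fin.addCases (fun i => ?_) (fun i => ?_) k
      · exact Or.inl ⟨i, by simp⟩
      · exact Or.inr ⟨i, by simp⟩
    · rintro (⟨i, rfl⟩ | ⟨i, rfl⟩)
      · exact ⟨Fin.castAdd f i, by simp⟩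
      · exact ⟨Fin.natAdd e i, by simp⟩
  have z1 : ∀ i, mco c t u (b i, r i, s i) = 0 := by
    intro i
    unfold mco
    rw [Finset.card_eq_zero, Finset.filter_eq_empty_iff]
    intro j _ h
    exact hsep i j h.symm
  have z2 : ∀ j, mco b r s (c j, t j, u j) = 0 := by
    intro j
    unfold mco
    rw [Finset.card_eq_zero, Finset.filter_eq_empty_iff]
    intro i _ h
    exact hsep i j h
  rw [him, Finset.filter_union, Finset.prod_union]
  · congr 1
    · refine Finset.prod_congr rfl fun w hw => ?_
      simp only [mem_filter, mem_image, mem_univ, true_and] at hw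
      obtain ⟨⟨i, rfl⟩, -⟩ := hw
      rw [mco_append, z1, add_zero]
    · refine Finset.prod_congr rfl fun w hw => ?_
      simp only [mem_filter, mem_image, mem_univ, true_and] at hw
      obtain ⟨⟨i, rfl⟩, -⟩ := hw
      rw [mco_append, z2, zero_add]
  · apply Finset.disjoint_filter_filter
    rw [Finset.disjoint_left]
    intro w hw hw'
    simp only [mem_image, mem_univ, true_and] at hw hw'
    obtain ⟨i, rfl⟩ := hw
    obtain ⟨j, hj⟩ := hw'
    exact hsep i j hj.symm

lemma bas_append (P : GoodPair 𝕜 A β) {e f : ℕ} (b : Fin e → β) (c : Fin f → β) :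
    (fun k => P.bas (Fin.append b c k))
      = Fin.append (fun k => P.bas (b k)) (fun k => P.bas (c k)) := by
  funext k
  refine Fin.addCases (fun i => ?_) (fun i => ?_) k <;> simp

lemma eta_append {P : GoodPair 𝕜 A β} (D : Tower 𝕜 A β n T P)
    (ord : LinearOrder (A × Fin n × Fin n)) {e f : ℕ}
    {b : Fin e → β} {r s : Fin e → Fin n} {c : Fin f → β} {t u : Fin f → Fin n}
    (h1 : IsTriH P (fun k => P.bas (b k)) r s) (h2 : IsTriH P (fun k => P.bas (c k)) t u)
    (hsep : ∀ i j, (P.bas (b i), r i, s i) ≠ (P.bas (c j), t j, u j)) :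
    eta D ord (Fin.append b c) (Fin.append r t) (Fin.append s u)
      = D.star (eta D ord b r s) (eta D ord c t u) := by
  unfold eta xiB
  rw [facSel_append, bas_append, xiH_append D ord h1 h2 hsep, map_nsmul, map_nsmul,
    LinearMap.smul_apply, smul_smul, mul_comm]
  intro i j h
  simp only [Prod.mk.injEq] at h
  exact hsep i j (by rw [h.1, h.2.1, h.2.2])

lemma xiH_cast {P : GoodPair 𝕜 A β} (D : Tower 𝕜 A β n T P)
    (ord : LinearOrder (A × Fin n × Fin n)) {d e : ℕ} (h : d = e)
    (a : Fin e → A) (r s : Fin e → Fin n) :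
    xiH D ord (fun k : Fin d => a (cast (congrArg Fin h) k))
      (fun k : Fin d => r (cast (congrArg Fin h) k)) (fun k : Fin d => s (cast (congrArg Fin h) k))
      = cast (congrArg T h.symm) (xiH D ord a r s) := by
  subst h; rfl

lemma eta_cast {P : GoodPair 𝕜 A β} (D : Tower 𝕜 A β n T P)
    (ord : LinearOrder (A × Fin n × Fin n)) {d e : ℕ} (h : d = e)
    (a : Fin e → β) (r s : Fin e → Fin n) :
    eta D ord (fun k : Fin d => a (cast (congrArg Fin h) k))
      (fun k : Fin d => r (cast (congrArg Fin h) k)) (fun k : Fin d => s (cast (congrArg Fin h) k))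
      = cast (congrArg T h.symm) (eta D ord a r s) := by
  subst h; rfl

lemma IsTriH_cast {P : GoodPair 𝕜 A β} {d e : ℕ} (h : d = e)
    (a : Fin e → A) (r s : Fin e → Fin n) (H : IsTriH P a r s) :
    IsTriH P (fun k : Fin d => a (cast (congrArg Fin h) k))
      (fun k : Fin d => r (cast (congrArg Fin h) k))
      (fun k : Fin d => s (cast (congrArg Fin h) k)) := by
  subst h; exact H

lemma xiH_zero {P : GoodPair 𝕜 A β} (D : Tower 𝕜 A β n T P)
    (ord : LinearOrder (A × Fin n × Fin n)) {d : ℕ} (h : d = 0)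
    (a : Fin d → A) (r s : Fin d → Fin n) :
    xiH D ord a r s = cast (congrArg T h.symm) (D.X Fin.elim0 Fin.elim0 Fin.elim0) := by
  subst h
  have ha : a = Fin.elim0 := Subsingleton.elim _ _
  have hr : r = Fin.elim0 := Subsingleton.elim _ _
  have hs : s = Fin.elim0 := Subsingleton.elim _ _
  subst ha hr hs
  have : (univ.image fun σ : Equiv.Perm (Fin 0) =>
      ((Fin.elim0 : Fin 0 → A) ∘ σ, (Fin.elim0 : Fin 0 → Fin n) ∘ σ, (Fin.elim0 : Fin 0 → Fin n) ∘ σ))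
      = {(Fin.elim0, Fin.elim0, Fin.elim0)} := by
    ext w
    simp only [mem_image, mem_univ, true_and, mem_singleton]
    exact ⟨fun _ => Subsingleton.elim _ _, fun _ => ⟨1, Subsingleton.elim _ _⟩⟩
  unfold xiH
  rw [this, Finset.sum_singleton]
  simp [ang]

lemma eta_zero {P : GoodPair 𝕜 A β} (D : Tower 𝕜 A β n T P)
    (ord : LinearOrder (A × Fin n × Fin n)) {d : ℕ} (h : d = 0)
    (a : Fin d → β) (r s : Fin d → Fin n) :
    eta D ord a r s = cast (congrArg T h.symm) (D.X Fin.elim0 Fin.elim0 Fin.elim0) := by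
  unfold eta xiB
  rw [xiH_zero D ord h]
  subst h
  simp [facSel]

lemma concatB_entry : ∀ {q : ℕ} (sz : Fin q → ℕ) (k : Fin (∑ m, sz m)),
    ∃ (m : Fin q) (t : Fin (sz m)), ∀ {α : Type} (f : ∀ m, Fin (sz m) → α),
      concatB sz f k = f m t
  | 0, sz, k => Fin.elim0 (cast (congrArg Fin (Fin.sum_univ_zero sz)) k)
  | (q + 1), sz, k => by
      simp only [concatB]
      generalize cast (congrArg Fin (Fin.sum_univ_castSucc sz)) k = k'
      refine Fin.addCases (fun i => ?_) (fun i => ?_) k'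
      · obtain ⟨m, t, h⟩ := concatB_entry (fun m => sz m.castSucc) i
        refine ⟨m.castSucc, t, fun f => ?_⟩
        rw [Fin.append_left, h]
      · exact ⟨Fin.last q, i, fun f => by rw [Fin.append_right]⟩

lemma concatB_bas (P : GoodPair 𝕜 A β) {q : ℕ} (sz : Fin q → ℕ) (b : ∀ m, Fin (sz m) → β) :
    (fun k => P.bas (concatB sz b k)) = concatB sz (fun m k => P.bas (b m k)) := by
  funext k
  obtain ⟨m, t, h⟩ := concatB_entry sz k
  rw [h, h]

lemma concat_sep {q : ℕ} (sz : Fin (q + 1) → ℕ)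
    (a : ∀ m, Fin (sz m) → A) (r s : ∀ m, Fin (sz m) → Fin n)
    (hsep : ∀ m l : Fin (q + 1), m ≠ l → ∀ (t : Fin (sz m)) (u : Fin (sz l)),
      (a m t, r m t, s m t) ≠ (a l u, r l u, s l u)) (i) (j : Fin (sz (Fin.last q))) :
    (concatB (fun m => sz m.castSucc) (fun m => a m.castSucc) i,
      concatB (fun m => sz m.castSucc) (fun m => r m.castSucc) i,
      concatB (fun m => sz m.castSucc) (fun m => s m.castSucc) i)
      ≠ (a (Fin.last q) j, r (Fin.last q) j, s (Fin.last q) j) := by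
  obtain ⟨m, t, h⟩ := concatB_entry (fun m => sz m.castSucc) i
  rw [h, h, h]
  exact hsep _ _ (Fin.castSucc_lt_last m).ne t j

lemma concat_tri (P : GoodPair 𝕜 A β) : ∀ (q : ℕ) (sz : Fin q → ℕ)
    (a : ∀ m, Fin (sz m) → A) (r s : ∀ m, Fin (sz m) → Fin n)
    (_ : ∀ m, IsTriH P (a m) (r m) (s m))
    (_ : ∀ m l : Fin q, m ≠ l → ∀ (t : Fin (sz m)) (u : Fin (sz l)),
      (a m t, r m t, s m t) ≠ (a l u, r l u, s l u)),
    IsTriH P (concatB sz a) (concatB sz r) (concatB sz s)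
  | 0, sz, a, r, s, _, _ =>
      ⟨fun k => Fin.elim0 (cast (congrArg Fin (Fin.sum_univ_zero sz)) k),
        fun k => Fin.elim0 (cast (congrArg Fin (Fin.sum_univ_zero sz)) k)⟩
  | (q + 1), sz, a, r, s, htri, hsep =>
      IsTriH_cast (Fin.sum_univ_castSucc sz) _ _ _
        (IsTriH.append (concat_tri P q _ _ _ _ (fun m => htri m.castSucc)
          (fun m l hml => hsep _ _ (fun h => hml (Fin.castSucc_injective _ h)))) (htri (Fin.last q))
          (concat_sep sz a r s hsep))

lemma xi_concat {P : GoodPair 𝕜 A β} (D : Tower 𝕜 A β n T P)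
    (ord : LinearOrder (A × Fin n × Fin n)) : ∀ (q : ℕ) (sz : Fin q → ℕ)
    (a : ∀ m, Fin (sz m) → A) (r s : ∀ m, Fin (sz m) → Fin n)
    (_ : ∀ m, IsTriH P (a m) (r m) (s m))
    (_ : ∀ m l : Fin q, m ≠ l → ∀ (t : Fin (sz m)) (u : Fin (sz l)),
      (a m t, r m t, s m t) ≠ (a l u, r l u, s l u)),
    xiH D ord (concatB sz a) (concatB sz r) (concatB sz s)
      = starBlocks D q sz fun m => xiH D ord (a m) (r m) (s m)
  | 0, sz, a, r, s, _, _ => xiH_zero D ord (Fin.sum_univ_zero sz) _ _ _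
  | (q + 1), sz, a, r, s, htri, hsep => by
      have hs' : ∀ m l : Fin q, m ≠ l → ∀ (t : Fin (sz m.castSucc)) (u : Fin (sz l.castSucc)),
          (a m.castSucc t, r m.castSucc t, s m.castSucc t)
            ≠ (a l.castSucc u, r l.castSucc u, s l.castSucc u) :=
        fun m l hml => hsep _ _ (fun h => hml (Fin.castSucc_injective _ h))
      have ih := xi_concat D ord q (fun m => sz m.castSucc) (fun m => a m.castSucc)
        (fun m => r m.castSucc) (fun m => s m.castSucc) (fun m => htri m.castSucc) hs'
      have ht := concat_tri P q (fun m => sz m.castSucc) (fun m => a m.castSucc)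
        (fun m => r m.castSucc) (fun m => s m.castSucc) (fun m => htri m.castSucc) hs'
      refine (xiH_cast D ord (Fin.sum_univ_castSucc sz) _ _ _).trans ?_
      rw [xiH_append D ord ht (htri (Fin.last q)) (concat_sep sz a r s hsep), ih]
      rfl

lemma eta_concat {P : GoodPair 𝕜 A β} (D : Tower 𝕜 A β n T P)
    (ord : LinearOrder (A × Fin n × Fin n)) : ∀ (q : ℕ) (sz : Fin q → ℕ)
    (b : ∀ m, Fin (sz m) → β) (r s : ∀ m, Fin (sz m) → Fin n)
    (_ : ∀ m, IsTriH P (fun k => P.bas (b m k)) (r m) (s m))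
    (_ : ∀ m l : Fin q, m ≠ l → ∀ (t : Fin (sz m)) (u : Fin (sz l)),
      (P.bas (b m t), r m t, s m t) ≠ (P.bas (b l u), r l u, s l u)),
    eta D ord (concatB sz b) (concatB sz r) (concatB sz s)
      = starBlocks D q sz fun m => eta D ord (b m) (r m) (s m)
  | 0, sz, b, r, s, _, _ => eta_zero D ord (Fin.sum_univ_zero sz) _ _ _
  | (q + 1), sz, b, r, s, htri, hsep => by
      have hs' : ∀ m l : Fin q, m ≠ l → ∀ (t : Fin (sz m.castSucc)) (u : Fin (sz l.castSucc)),
          (P.bas (b m.castSucc t), r m.castSucc t, s m.castSucc t)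
            ≠ (P.bas (b l.castSucc u), r l.castSucc u, s l.castSucc u) :=
        fun m l hml => hsep _ _ (fun h => hml (Fin.castSucc_injective _ h))
      have ih := eta_concat D ord q (fun m => sz m.castSucc) (fun m => b m.castSucc)
        (fun m => r m.castSucc) (fun m => s m.castSucc) (fun m => htri m.castSucc) hs'
      have ht := concat_tri P q (fun m => sz m.castSucc) (fun m k => P.bas (b m.castSucc k))
        (fun m => r m.castSucc) (fun m => s m.castSucc) (fun m => htri m.castSucc) hs'
      have hb := concatB_bas P (fun m : Fin q => sz m.castSucc) (fun m => b m.castSucc)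
      have hsp := concat_sep sz (fun m k => P.bas (b m k)) r s hsep
      rw [← hb] at ht hsp
      refine (eta_cast D ord (Fin.sum_univ_castSucc sz) _ _ _).trans ?_
      rw [eta_append D ord ht (htri (Fin.last q)) hsp, ih]
      rfl

/-- Let `d = d_1 + ⋯ + d_q`, let `(𝐚^{(m)},𝐫^{(m)},𝐬^{(m)}) ∈ Tri^H(n,d_m)`
and let `(𝐚,𝐫,𝐬)` be the concatenation.  If `(𝐚,𝐫,𝐬)` is `δ`-separated then
`ξ^𝐚_{𝐫,𝐬} = ξ^{𝐚^{(1)}}_{𝐫^{(1)},𝐬^{(1)}} * ⋯ * ξ^{𝐚^{(q)}}_{𝐫^{(q)},𝐬^{(q)}}`, and if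
moreover all entries of the `𝐚^{(m)}` are basis elements (entries of `B`), then also
`η^𝐚_{𝐫,𝐬} = η^{𝐚^{(1)}}_{𝐫^{(1)},𝐬^{(1)}} * ⋯ * η^{𝐚^{(q)}}_{𝐫^{(q)},𝐬^{(q)}}`. -/
theorem statement8 {𝕜 A β : Type} [CommRing 𝕜] [IsDomain 𝕜] [CharZero 𝕜]
    [NonUnitalRing A] [Module 𝕜 A] [SMulCommClass 𝕜 A A] [IsScalarTower 𝕜 A A]
    {n : ℕ} (hn : 0 < n) {T : ℕ → Type} [∀ e, NonUnitalRing (T e)] [∀ e, Module 𝕜 (T e)]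
    (P : GoodPair 𝕜 A β) (D : Tower 𝕜 A β n T P) (ord : LinearOrder (A × Fin n × Fin n))
    (q : ℕ) (sz : Fin q → ℕ)
    (a : ∀ m, Fin (sz m) → A) (r s : ∀ m, Fin (sz m) → Fin n)
    (htri : ∀ m, IsTriH P (a m) (r m) (s m))
    (hsep : ∀ m l : Fin q, m ≠ l → ∀ (t : Fin (sz m)) (u : Fin (sz l)),
      (a m t, r m t, s m t) ≠ (a l u, r l u, s l u)) :
    (xiH D ord (concatB sz a) (concatB sz r) (concatB sz s)
      = starBlocks D q sz fun m => xiH D ord (a m) (r m) (s m)) ∧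
    (∀ bw : ∀ m, Fin (sz m) → β, (∀ m k, a m k = P.bas (bw m k)) →
      eta D ord (concatB sz bw) (concatB sz r) (concatB sz s)
        = starBlocks D q sz fun m => eta D ord (bw m) (r m) (s m)) := by
  refine ⟨xi_concat D ord q sz a r s htri hsep, fun bw hbw => ?_⟩
  obtain rfl : a = fun m k => P.bas (bw m k) := by
    funext m k; exact hbw m k
  exact eta_concat D ord q sz bw r s htri hsep
end GS
end
end

section
/- The 𝕜-submodule T^A_𝔞(n,d) of S^A(n,d) depends only on the subalgebra 𝔞 and not on the choices made in its definition: if 𝔠, B and 𝔠′, B′ are two choices of complement of 𝔞 in A_0 and of (A,𝔞)-basis, then the 𝕜-span of the elements η^𝐛_{𝐫,𝐬} constructed from (𝔠, B) equals the 𝕜-span of the elements η^{𝐛′}_{𝐫,𝐬} constructed from (𝔠′, B′). -/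
open Finset

open scoped Classical TensorProduct

noncomputable section

namespace GS

variable {𝕜 A β : Type} [CommRing 𝕜] [NonUnitalRing A] [Module 𝕜 A]

variable {n : ℕ} {T : ℕ → Type} [∀ e, NonUnitalRing (T e)] [∀ e, Module 𝕜 (T e)]

/-- The subgroup of place permutations preserving a function. -/
def stabF {d : ℕ} {γ : Type} (f : Fin d → γ) : Subgroup (Equiv.Perm (Fin d)) where
  carrier := {σ | ∀ k, f (σ k) = f k}
  mul_mem' := by
    intro σ τ hs ht k
    rw [Equiv.Perm.mul_apply, hs, ht]
  one_mem' := by intro k; rfl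
  inv_mem' := by
    intro σ h k
    have := h (σ⁻¹ k)
    rw [show σ (σ⁻¹ k) = k from Equiv.apply_symm_apply σ k] at this
    exact this.symm

lemma mem_stabF {d : ℕ} {γ : Type} (f : Fin d → γ) (σ : Equiv.Perm (Fin d)) :
    σ ∈ stabF f ↔ ∀ k, f (σ k) = f k := Iff.rfl

lemma card_stabF {d : ℕ} {γ : Type} [DecidableEq γ] (f : Fin d → γ) :
    Nat.card (stabF f) = ∏ i ∈ univ.image f, Nat.factorial (univ.filter fun k => f k = i).card := by
  have h := DomMulAct.stabilizer_card' f
  rw [← Nat.card_eq_fintype_card] at h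
  have e : Nat.card (stabF f) = Nat.card {g : Equiv.Perm (Fin d) // f ∘ g = f} := by
    apply Nat.card_congr
    refine Equiv.subtypeEquivRight ?_
    intro σ
    rw [mem_stabF, funext_iff]
    rfl
  rw [e, h]
  refine Finset.prod_congr rfl fun i _ => ?_
  rw [Fintype.card_subtype]

/-- Remember the entry triple at the selected positions, the position itself elsewhere. -/
def selF (sel : β → Prop) {n d : ℕ} (b : Fin d → β) (r s : Fin d → Fin n) (k : Fin d) :
    (β × Fin n × Fin n) ⊕ Fin d :=
  if sel (b k) then Sum.inl (b k, r k, s k) else Sum.inr k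

lemma selF_eq_inl {sel : β → Prop} {n d : ℕ} {b : Fin d → β} {r s : Fin d → Fin n} {k : Fin d}
    {w : β × Fin n × Fin n} :
    selF sel b r s k = Sum.inl w ↔ sel (b k) ∧ (b k, r k, s k) = w := by
  unfold selF
  split_ifs with h <;> simp [h]

lemma selF_eq_inr {sel : β → Prop} {n d : ℕ} {b : Fin d → β} {r s : Fin d → Fin n} {k : Fin d}
    {j : Fin d} :
    selF sel b r s k = Sum.inr j ↔ ¬ sel (b k) ∧ k = j := by
  unfold selF
  split_ifs with h <;> simp [h]

lemma card_selF (sel : β → Prop) {n d : ℕ} (b : Fin d → β) (r s : Fin d → Fin n) :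
    Nat.card (stabF (selF sel b r s)) = facSel sel b r s := by
  rw [card_stabF]
  refine (Finset.prod_congr Finset.toLeft_disjSum_toRight.symm (fun _ _ => rfl)).trans ?_
  rw [Finset.prod_disjSum]
  have h2 : ∀ u : Finset (Fin d), ∏ x ∈ u,
      Nat.factorial (univ.filter fun k => selF sel b r s k = Sum.inr x).card = 1 := by
    intro u
    refine Finset.prod_eq_one fun j _ => ?_
    rw [Nat.factorial_eq_one]
    rw [Finset.card_le_one]
    intro x hx y hy
    simp only [mem_filter, selF_eq_inr] at hx hy
    rw [hx.2.2, hy.2.2]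
  rw [h2, mul_one, facSel]
  refine Finset.prod_congr ?_ ?_
  · ext w
    simp only [Finset.mem_toLeft, mem_image, mem_univ, true_and, mem_filter, selF_eq_inl]
    constructor
    · rintro ⟨k, hk, rfl⟩
      exact ⟨⟨k, rfl⟩, hk⟩
    · rintro ⟨⟨k, rfl⟩, hk⟩
      exact ⟨k, hk, rfl⟩
  · intro w hw
    congr 1
    unfold mco
    congr 1
    ext k
    simp only [mem_filter, mem_univ, true_and, selF_eq_inl]
    constructor
    · exact fun h => h.2
    · intro h
      refine ⟨?_, h⟩
      simp only [mem_filter] at hw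
      have := hw.2
      rw [← h] at this
      exact this

lemma card_stab_trip (P : GoodPair 𝕜 A β) {n d : ℕ} (b : Fin d → β) (r s : Fin d → Fin n)
    (h : IsTriB P b r s) :
    Nat.card (stabF (fun k => (b k, r k, s k))) =
      facSel (fun i => P.part i = 0) b r s * facSel (fun i => P.part i = 1) b r s := by
  rw [card_stabF, facSel, facSel, ← Finset.prod_union (M := ℕ)]
  · symm
    refine Finset.prod_subset (M := ℕ) ?_ ?_
    · intro w hw
      simp only [mem_union, mem_filter] at hw
      tauto
    · intro w hw hw'
      simp only [mem_union, mem_filter, hw, true_and, not_or] at hw'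
      have h2 : P.part w.1 = 2 := by
        have := hw'.1
        have := hw'.2
        generalize P.part w.1 = t at *
        omega
      rw [Nat.factorial_eq_one, mco, Finset.card_le_one]
      intro x hx y hy
      simp only [mem_filter, mem_univ, true_and] at hx hy
      by_contra hne
      refine h x y hne (hx.trans hy.symm) ?_
      rw [← h2, ← hx]
  · rw [Finset.disjoint_left]
    intro w h1 h2
    simp only [mem_filter] at h1 h2
    rw [h1.2] at h2
    exact absurd h2.2 (by decide)

lemma bas_homog (P : GoodPair 𝕜 A β) (i : β) : Homog P (P.bas i) := by
  have h0 := P.bas_mem_aa i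
  have h1 := P.bas_mem_cc i
  have h2 := P.bas_mem_od i
  have hc : P.cc ≤ P.ev := P.aa_sup_cc ▸ le_sup_right
  have : P.part i = 0 ∨ P.part i = 1 ∨ P.part i = 2 := by
    generalize P.part i = t
    omega
  rcases this with h | h | h
  · exact Or.inl (P.aa_le_ev (h0 h))
  · exact Or.inl (hc (h1 h))
  · exact Or.inr (h2 h)

lemma bas_mem_od_iff [Nontrivial 𝕜] (P : GoodPair 𝕜 A β) (i : β) :
    P.bas i ∈ P.od ↔ P.part i = 2 := by
  refine ⟨fun h => ?_, P.bas_mem_od i⟩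
  by_contra hne
  have hc : P.cc ≤ P.ev := P.aa_sup_cc ▸ le_sup_right
  have : P.part i = 0 ∨ P.part i = 1 := by
    generalize P.part i = t at *
    omega
  have hev : P.bas i ∈ P.ev := by
    rcases this with h | h
    · exact (P.aa_le_ev (P.bas_mem_aa i h))
    · exact (hc (P.bas_mem_cc i h))
  exact P.bas.ne_zero i ((Submodule.disjoint_def.1 P.compl.disjoint) _ hev h)

lemma repr_aa (P : GoodPair 𝕜 A β) (x : A) (hx : x ∈ P.aa) (j : β)
    (hj : P.bas.repr x j ≠ 0) : P.part j = 0 := by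
  have hc : P.cc ≤ P.ev := P.aa_sup_cc ▸ le_sup_right
  have htop : x ∈ Submodule.span 𝕜 (P.bas '' {i | P.part i = 0}) ⊔
      (Submodule.span 𝕜 (P.bas '' {i | P.part i = 1}) ⊔
      Submodule.span 𝕜 (P.bas '' {i | P.part i = 2})) := by
    rw [← Submodule.span_union, ← Submodule.span_union, ← Set.image_union, ← Set.image_union]
    have : ({i | P.part i = 0} ∪ ({i | P.part i = 1} ∪ {i | P.part i = 2}) : Set β) = Set.univ := by
      ext i
      simp only [Set.mem_union, Set.mem_ofPred_eq, Set.mem_univ, iff_true]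
      generalize P.part i = t
      omega
    rw [this, Set.image_univ, P.bas.span_eq]
    trivial
  obtain ⟨y0, h0, y12, h12, hs⟩ := Submodule.mem_sup.1 htop
  obtain ⟨y1, h1, y2, h2, hs'⟩ := Submodule.mem_sup.1 h12
  have h0' : y0 ∈ P.aa := by
    refine Submodule.span_le.2 ?_ h0
    rintro _ ⟨i, hi, rfl⟩
    exact P.bas_mem_aa i hi
  have h1' : y1 ∈ P.cc := by
    refine Submodule.span_le.2 ?_ h1
    rintro _ ⟨i, hi, rfl⟩
    exact P.bas_mem_cc i hi
  have h2' : y2 ∈ P.od := by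
    refine Submodule.span_le.2 ?_ h2
    rintro _ ⟨i, hi, rfl⟩
    exact P.bas_mem_od i hi
  have hy2 : y2 = 0 := by
    refine (Submodule.disjoint_def.1 P.compl.disjoint) _ ?_ h2'
    have : y2 = x - y0 - y1 := by rw [← hs, ← hs']; abel
    rw [this]
    exact P.ev.sub_mem (P.ev.sub_mem (P.aa_le_ev hx) (P.aa_le_ev h0')) (hc h1')
  have hy1 : y1 = 0 := by
    have : y1 = x - y0 := by rw [← hs, ← hs', hy2]; abel
    have hm : y1 ∈ P.aa ⊓ P.cc := ⟨by rw [this]; exact P.aa.sub_mem hx h0', h1'⟩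
    rw [P.aa_inf_cc] at hm
    exact hm
  have hx0 : x = y0 := by rw [← hs, ← hs', hy1, hy2]; abel
  rw [← hx0, P.bas.mem_span_image] at h0
  exact h0 (Finsupp.mem_support_iff.2 hj)

/-- Orbit-sum divisibility. -/
lemma orbit_sum {G Ω R M : Type} [Group G] [Finite G] [Fintype Ω] [MulAction G Ω]
    [CommRing R] [AddCommGroup M] [Module R M] (N : Submodule R M) (F : Ω → M)
    (hF : ∀ (g : G) w, F (g • w) = F w)
    (hN : ∀ w, ∃ t ∈ N, F w = Nat.card (MulAction.stabilizer G w) • t) :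
    ∃ t ∈ N, ∑ w, F w = Nat.card G • t := by
  choose t ht hFt using hN
  have := Fintype.ofFinite G
  refine ⟨∑ q : MulAction.orbitRel.Quotient G Ω, t q.out,
    Submodule.sum_mem _ fun q _ => ht _, ?_⟩
  rw [Finset.smul_sum,
    ← Finset.sum_fiberwise (s := univ) (fun w => (Quotient.mk'' w : MulAction.orbitRel.Quotient G Ω))]
  refine Finset.sum_congr rfl fun q _ => ?_
  have h1 : ∀ w ∈ univ.filter (fun w => (Quotient.mk'' w : MulAction.orbitRel.Quotient G Ω) = q),
      F w = F q.out := by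
    intro w hw
    simp only [mem_filter, mem_univ, true_and] at hw
    have h : MulAction.orbitRel G Ω w q.out := by
      apply Quotient.exact
      rw [Quotient.out_eq]
      exact hw
    rw [MulAction.orbitRel_apply] at h
    obtain ⟨g, hg⟩ := h
    rw [← hg]
    exact hF g _
  rw [Finset.sum_congr rfl h1, Finset.sum_const, hFt, smul_smul]
  congr 1
  have h2 := MulAction.card_orbit_mul_card_stabilizer_eq_card_group G (q.out : Ω)
  rw [← Nat.card_eq_fintype_card, ← Nat.card_eq_fintype_card, ← Nat.card_eq_fintype_card] at h2
  rw [← h2]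
  congr 1
  rw [← Fintype.card_subtype, ← Nat.card_eq_fintype_card]
  apply Nat.card_congr
  refine Equiv.subtypeEquivRight fun w => ?_
  rw [← MulAction.orbitRel_apply]
  constructor
  · intro h
    apply Quotient.exact
    rw [Quotient.out_eq]
    exact h
  · intro h
    have h' := Quotient.sound (s := MulAction.orbitRel G Ω) h
    rw [Quotient.out_eq] at h'
    exact h'

/-- Reordering sign versus orbit sign. -/
lemma sign_parity {n d : ℕ} (od : Submodule 𝕜 A) (ord : LinearOrder (A × Fin n × Fin n))
    (a : Fin d → A) (r s : Fin d → Fin n)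
    (h : ∀ k l : Fin d, k ≠ l → (a k, r k, s k) = (a l, r l, s l) → a k ∉ od)
    (σ : Equiv.Perm (Fin d)) :
    ((-1 : ℤ) ^ sgnc od σ a) =
      (-1 : ℤ) ^ (ang od ord a r s + ang od ord (a ∘ σ) (r ∘ σ) (s ∘ σ)) := by
  set t : Fin d → A × Fin n × Fin n := fun k => (a k, r k, s k) with ht
  set I := univ.filter fun kl : Fin d × Fin d =>
    kl.1 < kl.2 ∧ a kl.1 ∈ od ∧ a kl.2 ∈ od ∧ ord.lt (t kl.2) (t kl.1) with hI
  set S := univ.filter fun kl : Fin d × Fin d =>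
    kl.1 < kl.2 ∧ σ⁻¹ kl.2 < σ⁻¹ kl.1 ∧ a kl.1 ∈ od ∧ a kl.2 ∈ od with hS
  set J := univ.filter fun kl : Fin d × Fin d =>
    σ⁻¹ kl.1 < σ⁻¹ kl.2 ∧ a kl.1 ∈ od ∧ a kl.2 ∈ od ∧ ord.lt (t kl.2) (t kl.1) with hJ
  have e1 : sgnc od σ a = S.card := rfl
  have e2 : ang od ord a r s = I.card := rfl
  have e3 : ang od ord (a ∘ σ) (r ∘ σ) (s ∘ σ) = J.card := by
    unfold ang
    refine Finset.card_equiv (Equiv.prodCongr σ σ) ?_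
    rintro ⟨i, j⟩
    simp [hJ, ht]
  have key : ∀ k l : Fin d, k ≠ l → a k ∈ od →
      (¬ ord.lt (t l) (t k) ↔ ord.lt (t k) (t l)) := by
    intro k l hkl ho
    have hne : t k ≠ t l := fun he => h k l hkl he ho
    letI := ord
    constructor
    · intro h1
      exact lt_of_le_of_ne (not_lt.1 h1) hne
    · intro h1
      exact not_lt_of_gt h1
  have e4 : (J.filter fun kl => kl.1 < kl.2) = I \ S := by
    ext ⟨k, l⟩
    have hinj : σ⁻¹ k = σ⁻¹ l → k = l := fun h => σ⁻¹.injective h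
    simp only [hJ, hI, hS, mem_filter, mem_univ, true_and, mem_sdiff]
    constructor
    · rintro ⟨⟨h1, h2, h3, h4⟩, h5⟩
      exact ⟨⟨h5, h2, h3, h4⟩, fun h6 => lt_asymm h1 h6.2.1⟩
    · rintro ⟨⟨h1, h2, h3, h4⟩, h5⟩
      refine ⟨⟨?_, h2, h3, h4⟩, h1⟩
      rcases lt_trichotomy (σ⁻¹ k) (σ⁻¹ l) with h6 | h6 | h6
      · exact h6
      · exact absurd (hinj h6) h1.ne
      · exact absurd ⟨h1, h6, h2, h3⟩ h5
  have e5 : (J.filter fun kl => ¬ kl.1 < kl.2).card = (S \ I).card := by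
    refine Finset.card_equiv (Equiv.prodComm _ _) ?_
    rintro ⟨k, l⟩
    simp only [hJ, hI, hS, mem_filter, mem_univ, true_and, mem_sdiff, Equiv.prodComm_apply,
      Prod.swap_prod_mk]
    constructor
    · rintro ⟨⟨h1, h2, h3, h4⟩, h5⟩
      have hne : k ≠ l := by rintro rfl; exact lt_irrefl _ h1
      have hlk : l < k := lt_of_le_of_ne (not_lt.1 h5) hne.symm
      exact ⟨⟨hlk, h1, h3, h2⟩, fun h6 => (key k l hne h2).2 h6.2.2.2 h4⟩
    · rintro ⟨⟨h1, h2, h3, h4⟩, h5⟩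
      refine ⟨⟨h2, h4, h3, ?_⟩, not_lt_of_gt h1⟩
      refine (key l k h1.ne h3).1 fun h6 => h5 ⟨h1, h3, h4, h6⟩
  have e6 := Finset.card_filter_add_card_filter_not (s := J) (fun kl => kl.1 < kl.2)
  rw [e4, e5] at e6
  have e7 := Finset.card_sdiff_add_card_inter I S
  have e8 := Finset.card_sdiff_add_card_inter S I
  rw [Finset.inter_comm] at e8
  rw [e1, e2, e3]
  have : I.card + J.card = S.card + 2 * (I \ S).card := by omega
  rw [this, pow_add, pow_mul]
  simp

/-- Full signed symmetrization. -/
def symS {P : GoodPair 𝕜 A β} (D : Tower 𝕜 A β n T P) {d : ℕ} (x : T d) : T d :=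
  ∑ σ : Equiv.Perm (Fin d), D.act σ x

lemma symS_act {P : GoodPair 𝕜 A β} (D : Tower 𝕜 A β n T P) {d : ℕ} (x : T d)
    (τ : Equiv.Perm (Fin d)) : symS D (D.act τ x) = symS D x := by
  unfold symS
  simp only [D.act_act]
  exact Fintype.sum_equiv (Equiv.mulLeft τ) _ _ (fun σ => rfl)

lemma torsion_free [IsDomain 𝕜] [CharZero 𝕜] {P : GoodPair 𝕜 A β} (D : Tower 𝕜 A β n T P)
    {d : ℕ} (N : ℕ) (hN : N ≠ 0) (x : T d) (h : N • x = 0) : x = 0 := by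
  apply (D.bas d).repr.injective
  rw [map_zero]
  ext i
  have h1 : (D.bas d).repr (N • x) i = 0 := by rw [h]; simp
  rw [map_nsmul] at h1
  simp only [Finsupp.smul_apply, nsmul_eq_mul, mul_eq_zero, Nat.cast_eq_zero, hN, false_or] at h1
  simpa using h1

lemma symS_tri [Nontrivial 𝕜] {P : GoodPair 𝕜 A β} (D : Tower 𝕜 A β n T P)
    (ord : LinearOrder (A × Fin n × Fin n)) {d : ℕ} (b : Fin d → β) (r s : Fin d → Fin n)
    (h : IsTriB P b r s) :
    symS D (D.X (fun k => P.bas (b k)) r s) =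
      facSel (fun i => P.part i = 0) b r s • eta D ord b r s := by
  rw [eta, smul_smul, ← card_stab_trip P b r s h, xiB, xiH, symS]
  set a : Fin d → A := fun k => P.bas (b k) with ha
  have htr : ∀ k l : Fin d, (a k, r k, s k) = (a l, r l, s l) ↔
      ((b k, r k, s k) : β × Fin n × Fin n) = (b l, r l, s l) := by
    intro k l
    simp only [ha, Prod.mk.injEq, P.bas.injective.eq_iff]
  have h' : ∀ k l : Fin d, k ≠ l → (a k, r k, s k) = (a l, r l, s l) → a k ∉ P.od := by
    intro k l hkl he ho
    exact h k l hkl ((htr k l).1 he) ((bas_mem_od_iff P _).1 ho)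
  have h1 : ∀ σ : Equiv.Perm (Fin d), D.act σ (D.X a r s) =
      (fun w : (Fin d → A) × (Fin d → Fin n) × (Fin d → Fin n) =>
        ((-1 : ℤ) ^ (ang P.od ord a r s + ang P.od ord w.1 w.2.1 w.2.2)) •
          D.X w.1 w.2.1 w.2.2) (a ∘ σ, r ∘ σ, s ∘ σ) := by
    intro σ
    rw [D.act_X σ a r s (fun k => bas_homog P _), sign_parity P.od ord a r s h' σ]
  rw [Finset.sum_congr rfl fun σ _ => h1 σ]
  rw [Finset.sum_comp (s := univ) (fun w : (Fin d → A) × (Fin d → Fin n) × (Fin d → Fin n) =>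
        ((-1 : ℤ) ^ (ang P.od ord a r s + ang P.od ord w.1 w.2.1 w.2.2)) •
          D.X w.1 w.2.1 w.2.2) (fun σ : Equiv.Perm (Fin d) => (a ∘ σ, r ∘ σ, s ∘ σ)),
    Finset.smul_sum]
  refine Finset.sum_congr rfl fun w hw => ?_
  congr 1
  simp only [mem_image, mem_univ, true_and] at hw
  obtain ⟨τ, rfl⟩ := hw
  rw [← Fintype.card_subtype, ← Nat.card_eq_fintype_card]
  apply Nat.card_congr
  refine (Equiv.mulRight τ⁻¹).subtypeEquiv ?_
  intro σ
  rw [mem_stabF]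
  constructor
  · intro he k
    simp only [Prod.mk.injEq] at he
    have q1 := congrFun he.1 (τ⁻¹ k)
    have q2 := congrFun he.2.1 (τ⁻¹ k)
    have q3 := congrFun he.2.2 (τ⁻¹ k)
    have hk : τ (τ⁻¹ k) = k := Equiv.apply_symm_apply τ k
    simp only [Function.comp_apply, hk] at q1 q2 q3
    have := (htr (σ (τ⁻¹ k)) k).1 (by rw [q1, q2, q3])
    simpa using this
  · intro he
    have hk : ∀ k, (a (σ k), r (σ k), s (σ k)) = (a (τ k), r (τ k), s (τ k)) := by
      intro k
      rw [htr]
      have := he (τ k)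
      have hk : τ⁻¹ (τ k) = k := Equiv.symm_apply_apply τ k
      simpa [hk] using this
    simp only [Prod.mk.injEq] at hk ⊢
    exact ⟨funext fun k => (hk k).1, funext fun k => (hk k).2.1, funext fun k => (hk k).2.2⟩

lemma sgnc_swap {d : ℕ} (od : Submodule 𝕜 A) (a : Fin d → A) (k l : Fin d) (hkl : k < l)
    (hk : a k ∈ od) (hl : a l ∈ od) : Odd (sgnc od (Equiv.swap k l) a) := by
  set M := univ.filter fun j : Fin d => k < j ∧ j < l ∧ a j ∈ od with hM
  have : sgnc od (Equiv.swap k l) a =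
      (insert (k, l) (M.image (fun j => (k, j)) ∪ M.image (fun j => (j, l)))).card := by
    unfold sgnc
    congr 1
    ext ⟨i, j⟩
    rw [mem_filter]
    simp only [mem_univ, true_and, mem_insert, mem_union, mem_image, hM, mem_filter,
      Prod.mk.injEq]
    rw [Equiv.swap_inv, Equiv.swap_apply_def, Equiv.swap_apply_def]
    constructor
    · rintro ⟨h1, h2, h3, h4⟩
      grind
    · rintro (⟨rfl, rfl⟩ | ⟨x, hx, rfl, rfl⟩ | ⟨x, hx, rfl, rfl⟩)
      · grind
      · grind
      · grind
  rw [this, Finset.card_insert_of_notMem, Finset.card_union_of_disjoint,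
    Finset.card_image_of_injective, Finset.card_image_of_injective]
  · exact ⟨M.card, by omega⟩
  · intro x y h
    simpa using h
  · intro x y h
    simpa using h
  · rw [Finset.disjoint_left]
    simp only [mem_image, hM, mem_filter]
    rintro _ ⟨x, hx, rfl⟩ ⟨y, hy, hh⟩
    simp only [Prod.mk.injEq] at hh
    grind
  · simp only [mem_union, mem_image, hM, mem_filter, Prod.mk.injEq]
    grind

lemma symS_nontri [IsDomain 𝕜] [CharZero 𝕜] {P : GoodPair 𝕜 A β} (D : Tower 𝕜 A β n T P)
    {d : ℕ} (b : Fin d → β) (r s : Fin d → Fin n) (h : ¬ IsTriB P b r s) :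
    symS D (D.X (fun k => P.bas (b k)) r s) = 0 := by
  have h' : ∃ k l : Fin d, k < l ∧ ((b k, r k, s k) : β × Fin n × Fin n) = (b l, r l, s l) ∧
      P.part (b k) = 2 := by
    unfold IsTriB at h
    push Not at h
    obtain ⟨k, l, hne, he, hp⟩ := h
    rcases lt_or_gt_of_ne hne with hlt | hlt
    · exact ⟨k, l, hlt, he, hp⟩
    · refine ⟨l, k, hlt, he.symm, ?_⟩
      simp only [Prod.mk.injEq] at he
      rw [← he.1, hp]
  obtain ⟨k, l, hlt, he, hp⟩ := h'
  simp only [Prod.mk.injEq] at he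
  have hsw : ∀ {γ : Type} (f : Fin d → γ), f k = f l → f ∘ (Equiv.swap k l) = f := by
    intro γ f hf
    funext x
    simp only [Function.comp_apply, Equiv.swap_apply_def]
    split_ifs with h1 h2
    · rw [h1, hf]
    · rw [h2, hf]
    · rfl
  have hact := D.act_X (Equiv.swap k l) (fun k => P.bas (b k)) r s (fun k => bas_homog P _)
  rw [hsw _ (by simp only [he.1]), hsw _ he.2.1, hsw _ he.2.2,
    (sgnc_swap P.od _ k l hlt ((bas_mem_od_iff P _).2 hp)
      ((bas_mem_od_iff P _).2 (he.1 ▸ hp))).neg_one_pow, neg_one_smul] at hact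
  have h2 := symS_act D (D.X (fun k => P.bas (b k)) r s) (Equiv.swap k l)
  rw [hact] at h2
  have h3 : symS D (-(D.X (fun k => P.bas (b k)) r s)) =
      - symS D (D.X (fun k => P.bas (b k)) r s) := by
    simp only [symS, map_neg, Finset.sum_neg_distrib]
  rw [h3] at h2
  apply torsion_free D 2 (by norm_num)
  rw [two_smul]
  nth_rewrite 1 [← h2]
  simp

/-- The pure tensor map as a multilinear map. -/
def XM {P : GoodPair 𝕜 A β} (D : Tower 𝕜 A β n T P) {d : ℕ} (r s : Fin d → Fin n) :
    MultilinearMap 𝕜 (fun _ : Fin d => A) (T d) where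
  toFun a := D.X a r s
  map_update_add' := by
    intro inst a k x y
    have := D.X_update_add a r s k x y
    convert this
  map_update_smul' := by
    intro inst a k c x
    have := D.X_update_smul a r s k c x
    convert this

lemma act_eq {β' : Type} (P : GoodPair 𝕜 A β) (P' : GoodPair 𝕜 A β')
    (hev : P.ev = P'.ev) (hod : P.od = P'.od)
    (D : Tower 𝕜 A β n T P) (D' : Tower 𝕜 A β' n T P')
    (hX : ∀ (e : ℕ) (a : Fin e → A) (r s : Fin e → Fin n), D.X a r s = D'.X a r s)
    (d : ℕ) (σ : Equiv.Perm (Fin d)) : (D.act σ : T d →ₗ[𝕜] T d) = D'.act σ := by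
  refine (D.bas d).ext ?_
  rintro ⟨b, r, s⟩
  rw [D.bas_eq, D.act_X _ _ _ _ (fun k => bas_homog P _), hX d (fun k => P.bas (b k)), D'.act_X,
    hX, hod]
  intro k
  have := bas_homog P (b k)
  unfold Homog at *
  rwa [hev, hod] at this

lemma schurT_le {β' : Type} [IsDomain 𝕜] [CharZero 𝕜]
    (P : GoodPair 𝕜 A β) (P' : GoodPair 𝕜 A β')
    (hev : P.ev = P'.ev) (hod : P.od = P'.od) (haa : P.aa = P'.aa)
    (D : Tower 𝕜 A β n T P) (D' : Tower 𝕜 A β' n T P')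
    (hX : ∀ (e : ℕ) (a : Fin e → A) (r s : Fin e → Fin n), D.X a r s = D'.X a r s)
    (ord ord' : LinearOrder (A × Fin n × Fin n)) (d : ℕ) :
    SchurT D ord d ≤ SchurT D' ord' d := by
  refine Submodule.span_le.2 ?_
  rintro _ ⟨b, r, s, hb, rfl⟩
  set U : Finset β' := univ.biUnion fun k => (P'.bas.repr (P.bas (b k))).support with hU
  set m : Fin d → β' → 𝕜 := fun k j => P'.bas.repr (P.bas (b k)) j with hm
  have hexp : ∀ k, P.bas (b k) = ∑ j : U, m k j • P'.bas j := by
    intro k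
    rw [Finset.sum_coe_sort U (fun j => m k j • P'.bas j)]
    conv_lhs => rw [← P'.bas.linearCombination_repr (P.bas (b k))]
    rw [Finsupp.linearCombination_apply, Finsupp.sum]
    refine Finset.sum_subset ?_ ?_
    · exact Finset.subset_biUnion_of_mem
        (fun k => (P'.bas.repr (P.bas (b k))).support) (mem_univ k)
    · intro j _ hj
      rw [Finsupp.notMem_support_iff.1 hj, zero_smul]
  set G := stabF (selF (fun i => P.part i = 0) b r s) with hG
  have hGb : ∀ g ∈ G, ∀ k, b (g k) = b k ∧ r (g k) = r k ∧ s (g k) = s k ∧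
      (P.part (b k) ≠ 0 → g k = k) := by
    intro g hg k
    have h1 := (mem_stabF _ _).1 hg k
    by_cases hk : P.part (b k) = 0
    · have h2 : selF (fun i => P.part i = 0) b r s k = Sum.inl (b k, r k, s k) :=
        selF_eq_inl.2 ⟨hk, rfl⟩
      rw [h2, selF_eq_inl] at h1
      have h3 := h1.2
      simp only [Prod.mk.injEq] at h3
      exact ⟨h3.1, h3.2.1, h3.2.2, fun h => absurd hk h⟩
    · have h2 : selF (fun i => P.part i = 0) b r s k = Sum.inr k :=
        selF_eq_inr.2 ⟨hk, rfl⟩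
      rw [h2, selF_eq_inr] at h1
      rw [h1.2]
      exact ⟨rfl, rfl, rfl, fun _ => rfl⟩
  letI actI : MulAction G (Fin d → U) := arrowAction
  have hsm : ∀ (g : G) (w : Fin d → U) (k : Fin d), (g • w) k = w ((g : Equiv.Perm (Fin d))⁻¹ k) :=
    fun g w k => rfl
  set c : (Fin d → U) → 𝕜 := fun w => ∏ k, m k (w k) with hc
  have hcinv : ∀ (g : G) (w : Fin d → U), c (g • w) = c w := by
    intro g w
    simp only [hc, hsm]
    refine (Fintype.prod_equiv (g : Equiv.Perm (Fin d)) _ _ fun k => ?_).symm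
    rw [show (g : Equiv.Perm (Fin d))⁻¹ ((g : Equiv.Perm (Fin d)) k) = k from
      Equiv.symm_apply_apply _ k]
    simp only [hm]
    rw [(hGb g g.2 k).1]
  have hcaa : ∀ w : Fin d → U, c w ≠ 0 → ∀ k, P.part (b k) = 0 → P'.part (w k) = 0 := by
    intro w hw k hk
    refine repr_aa P' (P.bas (b k)) (haa ▸ P.bas_mem_aa _ hk) _ ?_
    exact Finset.prod_ne_zero_iff.1 hw k (mem_univ k)
  set F : (Fin d → U) → T d := fun w => c w • symS D' (D'.X (fun k => P'.bas (w k)) r s) with hF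
  have hsum : Nat.card G • eta D ord b r s = ∑ w, F w := by
    rw [hG, card_selF, ← symS_tri D ord b r s hb]
    have h1 : D.X (fun k => P.bas (b k)) r s =
        ∑ w : Fin d → U, c w • D'.X (fun k => P'.bas (w k)) r s := by
      rw [hX]
      change XM D' r s (fun k => P.bas (b k)) = _
      simp only [hexp]
      rw [MultilinearMap.map_sum]
      refine Finset.sum_congr rfl fun w _ => ?_
      rw [MultilinearMap.map_smul_univ]
      rfl
    rw [h1]
    simp only [symS, act_eq P P' hev hod D D' hX, hF, map_sum, map_smul, Finset.smul_sum]
    exact Finset.sum_comm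
  obtain ⟨t, ht, hts⟩ := orbit_sum (G := G) (SchurT D' ord' d) F (by
    intro g w
    simp only [hF]
    rw [hcinv]
    by_cases hw : c w = 0
    · rw [hw, zero_smul, zero_smul]
    congr 1
    rw [← symS_act D' (D'.X (fun k => P'.bas (w k)) r s) (g : Equiv.Perm (Fin d))⁻¹,
      D'.act_X _ _ _ _ (fun k => bas_homog P' _)]
    have hgi : (g : Equiv.Perm (Fin d))⁻¹ ∈ G := G.inv_mem g.2
    have hr : r ∘ ((g : Equiv.Perm (Fin d))⁻¹ : Equiv.Perm (Fin d)) = r :=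
      funext fun k => (hGb _ hgi k).2.1
    have hs : s ∘ ((g : Equiv.Perm (Fin d))⁻¹ : Equiv.Perm (Fin d)) = s :=
      funext fun k => (hGb _ hgi k).2.2.1
    have hz : sgnc P'.od (g : Equiv.Perm (Fin d))⁻¹ (fun k => P'.bas (w k)) = 0 := by
      unfold sgnc
      rw [Finset.card_eq_zero, Finset.filter_eq_empty_iff]
      rintro ⟨k, l⟩ _ ⟨h1, h2, h3, h4⟩
      rw [inv_inv] at h2
      have hne : ∀ k, P'.bas (w k) ∈ P'.od → (g : Equiv.Perm (Fin d)) k = k := by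
        intro k hk
        refine (hGb _ g.2 k).2.2.2 fun h0 => ?_
        have h5 := hcaa w hw k h0
        rw [(bas_mem_od_iff P' _).1 hk] at h5
        exact absurd h5 (by decide)
      simp only [hne k h3, hne l h4] at h2
      exact lt_asymm h1 h2
    rw [hz, hr, hs, pow_zero, one_smul]
    rfl) (by
    intro w
    by_cases hw : c w = 0
    · exact ⟨0, Submodule.zero_mem _, by simp only [hF, hw, zero_smul, smul_zero]⟩
    by_cases htri : IsTriB P' (fun k => (w k : β')) r s
    · have hdvd : Nat.card (MulAction.stabilizer G w) ∣
          facSel (fun i => P'.part i = 0) (fun k => (w k : β')) r s := by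
        rw [← card_selF, ← Subgroup.card_map_of_injective (f := G.subtype) G.subtype_injective]
        apply Subgroup.card_dvd_of_le
        rintro _ ⟨g, hg, rfl⟩
        have hg' : g⁻¹ • w = w := by
          have : g • w = w := hg
          rw [inv_smul_eq_iff, this]
        rw [mem_stabF]
        intro k
        have hk1 : w ((g : Equiv.Perm (Fin d)) k) = w k := by
          have := congrFun hg' k
          rw [hsm] at this
          simpa using this
        obtain ⟨_, h2, h3, h4⟩ := hGb g g.2 k
        by_cases hk : P.part (b k) = 0
        · have h5 := hcaa w hw k hk
          have h6 : selF (fun i => P'.part i = 0) (fun k => (w k : β')) r s k =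
              Sum.inl ((w k : β'), r k, s k) := selF_eq_inl.2 ⟨h5, rfl⟩
          rw [h6, selF_eq_inl]
          simp only [Subgroup.subtype_apply, hk1, h2, h3, h5, and_self]
        · have := h4 hk
          simp only [Subgroup.subtype_apply, this]
      obtain ⟨q, hq⟩ := hdvd
      refine ⟨c w • q • eta D' ord' (fun k => (w k : β')) r s, ?_, ?_⟩
      · refine Submodule.smul_mem _ _ (Submodule.smul_of_tower_mem _ _ (Submodule.subset_span ?_))
        exact ⟨_, r, s, htri, rfl⟩
      · simp only [hF]
        rw [symS_tri D' ord' (fun k => (w k : β')) r s htri, hq, mul_smul, smul_comm]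
    · refine ⟨0, Submodule.zero_mem _, ?_⟩
      simp only [hF]
      rw [symS_nontri D' (fun k => (w k : β')) r s htri, smul_zero, smul_zero])
  have hfin : eta D ord b r s = t := by
    rw [← sub_eq_zero]
    apply torsion_free D (Nat.card G) Nat.card_pos.ne'
    rw [smul_sub, hsum, hts, sub_self]
  rw [hfin]
  exact ht

/-- `T^A_𝔞(n,d)` depends only on the subalgebra `𝔞` and not on the choices
made in its definition: if `P` (with complement `𝔠`, basis `B` indexed by `β`, order `ord`)
and `P'` (with complement `𝔠'`, basis `B'` indexed by `β'`, order `ord'`) are two choices of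
good-pair data for the *same* superalgebra `(A, ev, od)` and the *same* subalgebra `𝔞`
(hypotheses `hev`, `hod`, `haa`), realized in the same tensor power model (hypothesis `hX`),
then the two spans of the `η`'s coincide. -/
theorem statement10 {𝕜 A β β' : Type} [CommRing 𝕜] [IsDomain 𝕜] [CharZero 𝕜]
    [NonUnitalRing A] [Module 𝕜 A] [SMulCommClass 𝕜 A A] [IsScalarTower 𝕜 A A]
    {n : ℕ} (hn : 0 < n) {T : ℕ → Type} [∀ e, NonUnitalRing (T e)] [∀ e, Module 𝕜 (T e)]
    (P : GoodPair 𝕜 A β) (P' : GoodPair 𝕜 A β')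
    (hev : P.ev = P'.ev) (hod : P.od = P'.od) (haa : P.aa = P'.aa)
    (D : Tower 𝕜 A β n T P) (D' : Tower 𝕜 A β' n T P')
    (hX : ∀ (e : ℕ) (a : Fin e → A) (r s : Fin e → Fin n), D.X a r s = D'.X a r s)
    (ord ord' : LinearOrder (A × Fin n × Fin n)) (d : ℕ) :
    SchurT D ord d = SchurT D' ord' d := by
  exact le_antisymm (schurT_le P P' hev hod haa D D' hX ord ord' d)
    (schurT_le P' P hev.symm hod.symm haa.symm D' D (fun e a r s => (hX e a r s).symm) ord' ord d)
end GS
end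
end
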